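/- Let p > 2 and let Ω ≠ ℝ^N be an arbitrary domain of ℝ^N. Assume p − 1 < λ < ∞ if N ≤ p(p+3)/(p−1), and p − 1 < λ < Λ_c(N, p) if N > p(p+3)/(p−1). Then there exists a constant C = C(p, N, λ) > 0, independent of Ω and u, such that every stable C^1 weak solution u of −Δ_p u = |u|^{λ−1} u on Ω satisfies |u(x)| + |∇u(x)|^{p/(λ+1)} ≤ C · dist(x, ∂Ω)^{−p/(λ+1−p)} for all x ∈ Ω. -/

import Mathlib

open MeasureTheory Metric
open scoped RealInnerProductSpace

/-- The critical exponent `Λ_c(N, p)`. -/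
noncomputable def LambdaC (N : ℕ) (p : ℝ) : ℝ :=
  (((p - 1) * N - p) ^ 2 + p ^ 2 * (p - 2) - p ^ 2 * (p - 1) * N +
      2 * p ^ 2 * Real.sqrt ((p - 1) * (N - 1))) /
    ((N - p) * ((p - 1) * N - p * (p + 3)))

namespace SES
open Set Filter Topology

abbrev E (N : ℕ) := EuclideanSpace ℝ (Fin N)

variable {N : ℕ}

lemma continuous_gradient {v : E N → ℝ} (hv : ContDiff ℝ 1 v) : Continuous (gradient v) := by
  have := hv.continuous_fderiv one_ne_zero
  unfold gradient
  exact (LinearIsometryEquiv.continuous _).comp this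

lemma norm_gradient (v : E N → ℝ) (x : E N) : ‖gradient v x‖ = ‖fderiv ℝ v x‖ := by
  unfold gradient
  exact LinearIsometryEquiv.norm_map _ _

lemma gradient_eq_zero_of_notMem {v : E N → ℝ} {x : E N} (hx : x ∉ tsupport v) :
    gradient v x = 0 := by
  have : fderiv ℝ v x = 0 := by
    by_contra h
    exact hx (support_fderiv_subset ℝ (f := v) h)
  rw [← norm_eq_zero, norm_gradient, this, norm_zero]

lemma grad_comp_mul {v η : E N → ℝ} {F : ℝ → ℝ} {F' : ℝ} {x : E N}
    (hv : DifferentiableAt ℝ v x) (hF : HasDerivAt F F' (v x)) (hη : DifferentiableAt ℝ η x) :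
    gradient (fun y => F (v y) * η y) x
      = (F' * η x) • gradient v x + F (v x) • gradient η x := by
  apply HasGradientAt.gradient
  rw [hasGradientAt_iff_hasFDerivAt]
  have h1 := (hF.comp_hasFDerivAt x hv.hasFDerivAt).mul hη.hasFDerivAt
  refine h1.congr_fderiv ?_
  ext y
  simp
  ring

lemma grad_comp {v : E N → ℝ} {F : ℝ → ℝ} {F' : ℝ} {x : E N}
    (hv : DifferentiableAt ℝ v x) (hF : HasDerivAt F F' (v x)) :
    gradient (fun y => F (v y)) x = F' • gradient v x := by
  apply HasGradientAt.gradient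
  rw [hasGradientAt_iff_hasFDerivAt]
  refine (hF.comp_hasFDerivAt x hv.hasFDerivAt).congr_fderiv ?_
  ext y
  simp

/-- signed power -/
noncomputable def sp (s t : ℝ) : ℝ := |t| ^ s * t

lemma sp_neg (s t : ℝ) : sp s (-t) = - sp s t := by simp [sp]

lemma sp_of_nonneg {s t : ℝ} (hs : 0 ≤ s) (ht : 0 ≤ t) : sp s t = t ^ (s + 1) := by
  rw [sp, abs_of_nonneg ht, Real.rpow_add_of_nonneg ht hs zero_le_one, Real.rpow_one]

lemma hasDerivAt_sp {s : ℝ} (hs : 0 ≤ s) (t : ℝ) : HasDerivAt (sp s) ((s + 1) * |t| ^ s) t := by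
  have pos : ∀ t : ℝ, 0 < t → HasDerivAt (sp s) ((s + 1) * |t| ^ s) t := by
    intro t ht
    have h := Real.hasDerivAt_rpow_const (x := t) (p := s + 1) (Or.inl ht.ne')
    rw [add_sub_cancel_right] at h
    rw [abs_of_pos ht]
    refine h.congr_of_eventuallyEq ?_
    filter_upwards [lt_mem_nhds ht] with y hy
    exact sp_of_nonneg hs hy.le
  rcases lt_trichotomy t 0 with ht | rfl | ht
  · have h := (pos (-t) (by linarith)).scomp t (hasDerivAt_neg t)
    have h2 := h.neg
    have : (sp s) = -(sp s ∘ Neg.neg) := by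
      ext y; simp [sp_neg]
    rw [this]
    refine h2.congr_deriv ?_
    simp
  · rcases hs.eq_or_lt with rfl | hs
    · have : sp 0 = id := by ext; simp [sp]
      rw [this]; simpa using hasDerivAt_id (0:ℝ)
    · rw [abs_zero, Real.zero_rpow hs.ne', mul_zero, hasDerivAt_iff_isLittleO_nhds_zero]
      simp only [zero_add, sp, abs_zero, mul_zero, sub_zero, smul_eq_mul]
      rw [Asymptotics.isLittleO_iff_tendsto' (by simp +contextual)]
      have hc : Tendsto (fun x : ℝ => |x| ^ s) (𝓝 0) (𝓝 0) := by
        have : Continuous (fun x : ℝ => |x| ^ s) := continuous_abs.rpow_const (fun _ => Or.inr hs.le)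
        have := this.tendsto 0
        simpa [Real.zero_rpow hs.ne'] using this
      refine hc.congr' ?_ 
      refine Eventually.of_forall fun x => ?_
      rcases eq_or_ne x 0 with rfl | hx
      · simp [Real.zero_rpow hs.ne']
      · field_simp
  · exact pos t ht

lemma contDiff_sp {s : ℝ} (hs : 0 ≤ s) : ContDiff ℝ 1 (sp s) := by
  rw [contDiff_one_iff_deriv]
  refine ⟨fun t => (hasDerivAt_sp hs t).differentiableAt, ?_⟩
  have : deriv (sp s) = fun t => (s + 1) * |t| ^ s := by
    ext t; exact (hasDerivAt_sp hs t).deriv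
  rw [this]
  exact continuous_const.mul (continuous_abs.rpow_const (fun _ => Or.inr hs))

/-- Positive part cubed and friends. -/
lemma hasDerivAt_pos_pow (n : ℕ) (hn : 1 ≤ n) (t : ℝ) :
    HasDerivAt (fun t : ℝ => (max t 0) ^ (n + 1)) ((n + 1) * (max t 0) ^ n) t := by
  rcases lt_trichotomy t 0 with ht | rfl | ht
  · rw [max_eq_right ht.le, zero_pow (by omega), mul_zero]
    refine (hasDerivAt_const t (0:ℝ)).congr_of_eventuallyEq ?_
    filter_upwards [gt_mem_nhds ht] with y hy
    rw [max_eq_right hy.le, zero_pow (by omega)]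
  · rw [max_self, zero_pow (by omega), mul_zero, hasDerivAt_iff_isLittleO_nhds_zero]
    simp only [zero_add, max_self, mul_zero, sub_zero, smul_eq_mul, ne_eq, Nat.add_eq_zero_iff, one_ne_zero, and_false, not_false_eq_true, zero_pow]
    rw [Asymptotics.isLittleO_iff_tendsto' (by simp +contextual)]
    have hc : Tendsto (fun x : ℝ => (max x 0) ^ n) (𝓝 0) (𝓝 0) := by
      have : Continuous (fun x : ℝ => (max x 0) ^ n) := by fun_prop
      have := this.tendsto 0
      simpa [zero_pow (by omega : n ≠ 0)] using this
    refine hc.congr' ?_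
    refine Eventually.of_forall fun x => ?_
    rcases lt_trichotomy x 0 with hx | rfl | hx
    · simp [max_eq_right hx.le, zero_pow (by omega : n ≠ 0)]
    · simp [zero_pow (by omega : n ≠ 0)]
    · simp only [max_eq_left hx.le]; field_simp; ring
  · rw [max_eq_left ht.le]
    have h := hasDerivAt_pow (n + 1) t
    simp only [Nat.cast_add, Nat.cast_one, add_tsub_cancel_right] at h
    refine h.congr_of_eventuallyEq ?_
    filter_upwards [lt_mem_nhds ht] with y hy
    rw [max_eq_left hy.le]

lemma contDiff_pos_pow (n : ℕ) (hn : 1 ≤ n) : ContDiff ℝ 1 (fun t : ℝ => (max t 0) ^ (n + 1)) := by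
  rw [contDiff_one_iff_deriv]
  refine ⟨fun t => (hasDerivAt_pos_pow n hn t).differentiableAt, ?_⟩
  have : deriv (fun t : ℝ => (max t 0) ^ (n + 1)) = fun t : ℝ => ((n : ℝ) + 1) * (max t 0) ^ n := by
    ext t; exact (hasDerivAt_pos_pow n hn t).deriv
  rw [this]
  fun_prop

/-- A `C^1` weak solution on the ball `ball c R` that is globally `C^1` as a function. -/
def Weak (p lam : ℝ) (U : Set (E N)) (v : E N → ℝ) : Prop :=
  ∀ φ : E N → ℝ, ContDiff ℝ 1 φ → HasCompactSupport φ → tsupport φ ⊆ U →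
    ∫ x, ‖gradient v x‖ ^ (p - 2) * ⟪gradient v x, gradient φ x⟫ =
      ∫ x, sp (lam - 1) (v x) * φ x

def Stab (p lam : ℝ) (U : Set (E N)) (v : E N → ℝ) : Prop :=
  ∀ φ : E N → ℝ, ContDiff ℝ 1 φ → HasCompactSupport φ → tsupport φ ⊆ U →
    0 ≤ ∫ x, (‖gradient v x‖ ^ (p - 2) * ‖gradient φ x‖ ^ 2 +
                ((p - 2) * ‖gradient v x‖ ^ (p - 4) * ⟪gradient v x, gradient φ x⟫ ^ 2 -
                  lam * |v x| ^ (lam - 1) * φ x ^ 2))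

end SES

namespace SES
open Set Filter Topology
variable {N : ℕ}

lemma young3 {α β κ ε : ℝ} (hα : 0 < α) (hβ : 0 < β) (hκ : 0 < κ) (hs : α + β + κ = 1)
    (hε : 0 < ε) : ∃ C : ℝ, 0 < C ∧ ∀ A B T : ℝ, 0 ≤ A → 0 ≤ B → 0 ≤ T →
      A ^ α * B ^ β * T ^ κ ≤ ε * (A + B) + C * T := by
  set L := ε ^ (-((α + β) / κ)) with hL
  have hLp : 0 < L := Real.rpow_pos_of_pos hε _
  have hLk : L ^ κ = ε ^ (-(α + β)) := by
    rw [hL, ← Real.rpow_mul hε.le]; congr 1; field_simp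
  refine ⟨L, hLp, fun A B T hA hB hT => ?_⟩
  have h := Real.geom_mean_le_arith_mean3_weighted hα.le hβ.le hκ.le
    (mul_nonneg hε.le hA) (mul_nonneg hε.le hB) (mul_nonneg hLp.le hT) hs
  have h2 : (ε * A) ^ α * (ε * B) ^ β * (L * T) ^ κ = A ^ α * B ^ β * T ^ κ := by
    rw [Real.mul_rpow hε.le hA, Real.mul_rpow hε.le hB, Real.mul_rpow hLp.le hT, hLk]
    have : ε ^ α * ε ^ β * ε ^ (-(α + β)) = 1 := by
      rw [← Real.rpow_add hε, ← Real.rpow_add hε]; simp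
    calc _ = (ε ^ α * ε ^ β * ε ^ (-(α + β))) * (A ^ α * B ^ β * T ^ κ) := by ring
      _ = _ := by rw [this, one_mul]
  rw [h2] at h
  have a1 : α * (ε * A) ≤ 1 * (ε * A) := by gcongr; linarith
  have a2 : β * (ε * B) ≤ 1 * (ε * B) := by gcongr; linarith
  have a3 : κ * (L * T) ≤ 1 * (L * T) := by gcongr; linarith
  linarith

lemma err_pointwise {p lam γ : ℝ} (hp : 2 < p) (hlam : p - 1 < lam) (hγ : 1 ≤ γ) {m i : ℕ}
    (hm : p * ((lam + γ) / (lam - p + 1)) ≤ 2 * m) (hi1 : 1 ≤ i) (hi2 : i ≤ 2)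
    {ε : ℝ} (hε : 0 < ε) : ∃ C : ℝ, 0 < C ∧ ∀ a b n t : ℝ, 0 ≤ a → 0 ≤ b → 0 ≤ n → n ≤ 1 → 0 ≤ t →
      a ^ (p - i) * b ^ (γ - 1 + i) * n ^ (2 * m - i) * t ^ i ≤
        ε * (a ^ p * b ^ (γ - 1) * n ^ (2 * m) + b ^ (lam + γ) * n ^ (2 * m)) +
          C * t ^ (p * ((lam + γ) / (lam - p + 1))) := by
  have hi1' : (1:ℝ) ≤ i := by exact_mod_cast hi1
  have hi2' : (i:ℝ) ≤ 2 := by exact_mod_cast hi2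
  have hμ : 0 < lam - p + 1 := by linarith
  set q := (lam + γ) / (lam - p + 1) with hq
  have hq1 : 1 < q := by rw [hq, one_lt_div hμ]; linarith
  have hqi : (lam + γ) * (1 - 1 / q) = γ + p - 1 := by
    rw [hq]; have : lam + γ ≠ 0 := by linarith
    field_simp; ring
  have hpos : 0 < p * q := by positivity
  have h2m : i ≤ 2 * m := by
    have : (2:ℝ) < 2 * m := by nlinarith
    have : 2 < 2 * m := by exact_mod_cast this
    omega
  set α := 1 - i / p with hα
  set κ := i / (p * q) with hκ
  set β := i / p * (1 - 1 / q) with hβ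
  have hαp : 0 < α := by
    rw [hα, sub_pos, div_lt_one (by linarith)]; linarith
  have hκp : 0 < κ := by positivity
  have h1q : 0 < 1 - 1 / q := by rw [sub_pos, div_lt_one (by linarith)]; exact hq1
  have hβp : 0 < β := by
    have : 0 < (i:ℝ) / p := by positivity
    positivity
  have hsum : α + β + κ = 1 := by
    rw [hα, hβ, hκ]; field_simp; ring
  obtain ⟨C, hC, H⟩ := young3 hαp hβp hκp hsum hε
  refine ⟨C, hC, fun a b n t ha hb hn hn1 ht => ?_⟩
  refine le_trans ?_ (H _ _ _ (by positivity) (by positivity) (by positivity))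
  have e1 : (a ^ p * b ^ (γ - 1) * n ^ (2 * m)) ^ α
      = a ^ (p - i) * b ^ ((γ - 1) * α) * n ^ ((2 * m : ℝ) * α) := by
    rw [Real.mul_rpow (by positivity) (by positivity), Real.mul_rpow (by positivity) (by positivity),
      ← Real.rpow_mul ha, ← Real.rpow_mul hb, ← Real.rpow_natCast n, ← Real.rpow_mul hn]
    push_cast
    congr 3
    rw [hα]; field_simp
  have e2 : (b ^ (lam + γ) * n ^ (2 * m)) ^ β = b ^ ((lam + γ) * β) * n ^ ((2 * m : ℝ) * β) := by
    rw [Real.mul_rpow (by positivity) (by positivity),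
      ← Real.rpow_mul hb, ← Real.rpow_natCast n, ← Real.rpow_mul hn]
    push_cast
    rfl
  have e3 : (t ^ (p * q)) ^ κ = t ^ i := by
    rw [← Real.rpow_mul ht, ← Real.rpow_natCast t]
    congr 1
    rw [hκ]; field_simp
  have e4 : b ^ (γ - 1 + i) = b ^ ((γ - 1) * α) * b ^ ((lam + γ) * β) := by
    rw [← Real.rpow_add_of_nonneg hb (mul_nonneg (by linarith) hαp.le)
      (mul_nonneg (by linarith) hβp.le)]
    congr 1
    have : (lam + γ) * β = i / p * (γ + p - 1) := by rw [hβ, ← hqi]; ring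
    rw [this, hα]; field_simp; ring
  have e5 : n ^ (2 * m - i) ≤ n ^ ((2 * m : ℝ) * α) * n ^ ((2 * m : ℝ) * β) := by
    rw [← Real.rpow_add_of_nonneg hn (by positivity) (by positivity), ← Real.rpow_natCast n]
    have hcast : ((2 * m - i : ℕ) : ℝ) = 2 * m - i := by
      rw [Nat.cast_sub h2m]; push_cast; ring
    rw [hcast]
    refine Real.rpow_le_rpow_of_exponent_ge_of_imp hn hn1 ?_ ?_
    · have : (2 * m : ℝ) * α + 2 * m * β = 2 * m - 2 * m * κ := by
        have : α + β = 1 - κ := by linarith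
        rw [← mul_add, this]; ring
      rw [this]
      have : (i:ℝ) ≤ 2 * m * κ := by
        rw [hκ]
        rw [← mul_div_assoc, le_div_iff₀ hpos]
        have := mul_le_mul_of_nonneg_right hm (by linarith : (0:ℝ) ≤ i)
        linarith
      linarith
    · intro _ h
      exfalso
      have h0 : (2:ℝ) * m - i ≤ 0 := by
        by_contra h'
        have : (0:ℝ) < 2 * m * α + 2 * m * β := by
          have : (0:ℝ) < 2 * m := by nlinarith
          positivity
        linarith
      have : (2:ℝ) < 2 * m := by nlinarith
      linarith
  rw [e1, e2, e3, e4]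
  calc _ = (a ^ (p - i) * b ^ ((γ - 1) * α) * b ^ ((lam + γ) * β) * t ^ i) * n ^ (2 * m - i) := by ring
    _ ≤ (a ^ (p - i) * b ^ ((γ - 1) * α) * b ^ ((lam + γ) * β) * t ^ i) *
        (n ^ ((2 * m : ℝ) * α) * n ^ ((2 * m : ℝ) * β)) := by gcongr
    _ = _ := by ring

end SES

namespace SES
open Set Filter Topology
variable {N : ℕ}

lemma hcs_of {f : E N → ℝ} {η : E N → ℝ} (hη : HasCompactSupport η)
    (h : ∀ x, x ∉ tsupport η → f x = 0) : HasCompactSupport f :=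
  HasCompactSupport.intro hη h

lemma integrable_of {f : E N → ℝ} {η : E N → ℝ} (hf : Continuous f) (hη : HasCompactSupport η)
    (h : ∀ x, x ∉ tsupport η → f x = 0) : Integrable f :=
  hf.integrable_of_hasCompactSupport (hcs_of hη h)

lemma tsupport_sub {f η : E N → ℝ} (h : ∀ x, x ∉ tsupport η → f x = 0) :
    tsupport f ⊆ tsupport η := by
  refine closure_minimal (fun x hx => ?_) (isClosed_tsupport η)
  by_contra h'
  exact hx (h x h')

lemma integral_lin4 {f1 f2 f3 f4 : E N → ℝ} (h1 : Integrable f1) (h2 : Integrable f2)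
    (h3 : Integrable f3) (h4 : Integrable f4) (c1 c2 c3 c4 : ℝ) :
    ∫ x, (c1 * f1 x + c2 * f2 x + c3 * f3 x - c4 * f4 x) =
      c1 * (∫ x, f1 x) + c2 * (∫ x, f2 x) + c3 * (∫ x, f3 x) - c4 * ∫ x, f4 x := by
  have i1 : Integrable (fun x => c1 * f1 x) := h1.const_mul _
  have i2 : Integrable (fun x => c2 * f2 x) := h2.const_mul _
  have i3 : Integrable (fun x => c3 * f3 x) := h3.const_mul _
  have i4 : Integrable (fun x => c4 * f4 x) := h4.const_mul _
  have i12 : Integrable (fun x => c1 * f1 x + c2 * f2 x) := i1.add i2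
  have i123 : Integrable (fun x => c1 * f1 x + c2 * f2 x + c3 * f3 x) := i12.add i3
  rw [integral_sub i123 i4, integral_add i12 i3, integral_add i1 i2]
  simp only [integral_const_mul]

lemma integral_le3 {f1 f2 f3 g : E N → ℝ} (h1 : Integrable f1) (h2 : Integrable f2)
    (h3 : Integrable f3) (hg : Integrable g) (ε C : ℝ)
    (h : ∀ x, g x ≤ ε * (f1 x + f2 x) + C * f3 x) :
    ∫ x, g x ≤ ε * ((∫ x, f1 x) + ∫ x, f2 x) + C * ∫ x, f3 x := by
  have i12 : Integrable (fun x => ε * (f1 x + f2 x)) := (h1.add h2).const_mul _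
  have i3 : Integrable (fun x => C * f3 x) := h3.const_mul _
  rw [← integral_add h1 h2, ← integral_const_mul, ← integral_const_mul, ← integral_add i12 i3]
  exact integral_mono hg (i12.add i3) h

/-- pointwise bound for the stability integrand -/
lemma stab_pointwise {p : ℝ} (hp : 2 < p) (P Q : E N) :
    ‖P‖ ^ (p - 2) * ‖Q‖ ^ 2 + (p - 2) * ‖P‖ ^ (p - 4) * ⟪P, Q⟫ ^ 2 ≤
      (p - 1) * (‖P‖ ^ (p - 2) * ‖Q‖ ^ 2) := by
  have h : ‖P‖ ^ (p - 4) * ⟪P, Q⟫ ^ 2 ≤ ‖P‖ ^ (p - 2) * ‖Q‖ ^ 2 := by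
    rcases eq_or_ne P 0 with rfl | hP
    · simp; positivity
    · have hP' : 0 < ‖P‖ := norm_pos_iff.2 hP
      have : ‖P‖ ^ (p - 2) = ‖P‖ ^ (p - 4) * ‖P‖ ^ 2 := by
        rw [← Real.rpow_natCast ‖P‖ 2, ← Real.rpow_add hP']; congr 1; push_cast; ring
      rw [this, mul_assoc, ← mul_pow]
      have h2 : ⟪P, Q⟫ ^ 2 ≤ (‖P‖ * ‖Q‖) ^ 2 := by
        rw [← sq_abs ⟪P, Q⟫]
        gcongr
        exact abs_real_inner_le_norm P Q
      gcongr
  nlinarith [mul_le_mul_of_nonneg_left h (by linarith : (0:ℝ) ≤ p - 2)]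

set_option maxHeartbeats 4000000 in
lemma integral_est {p lam γ : ℝ} (hp : 2 < p) (hlam : p - 1 < lam) (hγ : 1 ≤ γ)
    (hcond : (p - 1) * ((γ + 1) / 2) ^ 2 < lam * γ) :
    ∃ C : ℝ, 0 < C ∧ ∃ m : ℕ, 0 < m ∧ ∀ (U : Set (E N)) (v : E N → ℝ), ContDiff ℝ 1 v →
      Weak p lam U v → Stab p lam U v → ∀ η : E N → ℝ, ContDiff ℝ 1 η → HasCompactSupport η →
      tsupport η ⊆ U → (∀ x, 0 ≤ η x) → (∀ x, η x ≤ 1) →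
      ∫ x, |v x| ^ (lam + γ) * η x ^ (2 * m) ≤
        C * ∫ x, ‖gradient η x‖ ^ (p * ((lam + γ) / (lam - p + 1))) := by
  have hμ : 0 < lam - p + 1 := by linarith
  set q := (lam + γ) / (lam - p + 1) with hq
  have hq1 : 1 < q := by rw [hq, one_lt_div hμ]; linarith
  have hpq : 0 < p * q := by positivity
  obtain ⟨m, hm⟩ := exists_nat_ge (p * q / 2)
  have hm : p * q ≤ 2 * m := by linarith
  have hm2 : (2:ℝ) < 2 * m := by nlinarith
  have hm2' : 2 < 2 * m := by exact_mod_cast hm2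
  have hm1 : (1:ℝ) < m := by linarith
  set θ := (γ + 1) / 2 with hθ
  have hθ1 : 1 ≤ θ := by rw [hθ]; linarith
  set D := (p - 1) * θ ^ 2 with hD
  have hDpos : 0 < D := by rw [hD]; have : 0 < p - 1 := by linarith
                           positivity
  -- weight
  obtain ⟨w, hw1, hw2⟩ : ∃ w, D / γ < w ∧ w < lam := by
    apply exists_between
    rw [div_lt_iff₀ (by linarith)]; exact hcond
  have hw0 : 0 < w := lt_trans (by positivity) hw1
  have hw1' : D < w * γ := by rwa [div_lt_iff₀ (by linarith)] at hw1
  set c0 := min (lam - w) (w * γ - D) with hc0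
  have hc0p : 0 < c0 := lt_min (by linarith) (by linarith)
  set K1 := w * (2 * m) + (p - 1) * (2 * θ * m) with hK1
  set K2 := (p - 1) * (m:ℝ) ^ 2 with hK2
  have hp1 : 0 < p - 1 := by linarith
  have hK1p : 0 < K1 := by positivity
  have hK2p : 0 < K2 := by positivity
  set ε := c0 / 2 / (K1 + K2) with hε
  have hεp : 0 < ε := by positivity
  have hεc : (K1 + K2) * ε = c0 / 2 := by rw [hε]; field_simp
  obtain ⟨C1, hC1, H1⟩ := err_pointwise hp hlam hγ hm le_rfl one_le_two hεp
  obtain ⟨C2, hC2, H2⟩ := err_pointwise hp hlam hγ hm one_le_two le_rfl hεp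
  refine ⟨(K1 * C1 + K2 * C2) / (c0 / 2), by positivity, m, by omega, ?_⟩
  intro U v hv hW hS η hη hηc hηU hη0 hη1
  have hvd : ∀ x, DifferentiableAt ℝ v x := fun x => (hv.differentiable one_ne_zero) x
  have hηd : ∀ x, DifferentiableAt ℝ η x := fun x => (hη.differentiable one_ne_zero) x
  have hgv := continuous_gradient hv
  have hgη := continuous_gradient hη
  have hvc := hv.continuous
  have hηc' := hη.continuous
  have hη_out : ∀ x, x ∉ tsupport η → η x = 0 := fun x hx => image_eq_zero_of_notMem_tsupport hx
  have hg_out : ∀ x, x ∉ tsupport η → gradient η x = 0 := fun x hx => gradient_eq_zero_of_notMem hx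
  have rc : ∀ (f : E N → ℝ) (s : ℝ), Continuous f → 0 ≤ s → Continuous (fun x => f x ^ s) :=
    fun f s hf hs => hf.rpow_const (fun _ => Or.inr hs)
  -- the functions
  set fA : E N → ℝ := fun x => ‖gradient v x‖ ^ p * |v x| ^ (γ - 1) * η x ^ (2 * m) with hfA
  set fB : E N → ℝ := fun x => |v x| ^ (lam + γ) * η x ^ (2 * m) with hfB
  set fE1 : E N → ℝ := fun x => ‖gradient v x‖ ^ (p - (1:ℕ)) * |v x| ^ (γ - 1 + (1:ℕ)) * η x ^ (2 * m - 1) *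
      ‖gradient η x‖ ^ 1 with hfE1
  set fE2 : E N → ℝ := fun x => ‖gradient v x‖ ^ (p - (2:ℕ)) * |v x| ^ (γ - 1 + (2:ℕ)) * η x ^ (2 * m - 2) *
      ‖gradient η x‖ ^ 2 with hfE2
  set fT : E N → ℝ := fun x => ‖gradient η x‖ ^ (p * q) with hfT
  have n2m : 2 * m ≠ 0 := by omega
  have cgv : ∀ s : ℝ, 0 ≤ s → Continuous (fun x => ‖gradient v x‖ ^ s) := fun s hs => rc _ _ hgv.norm hs
  have cv : ∀ s : ℝ, 0 ≤ s → Continuous (fun x => |v x| ^ s) := fun s hs => rc _ _ hvc.abs hs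
  have iA : Integrable fA := by
    refine integrable_of (((cgv _ (by linarith)).mul (cv _ (by linarith))).mul (hηc'.pow _)) hηc ?_
    intro x hx; simp [hfA, hη_out x hx, n2m]
  have iB : Integrable fB := by
    refine integrable_of ((cv _ (by linarith)).mul (hηc'.pow _)) hηc ?_
    intro x hx; simp [hfB, hη_out x hx, n2m]
  have iE1 : Integrable fE1 := by
    refine integrable_of ((((cgv _ (by push_cast; linarith)).mul (cv _ (by push_cast; linarith))).mul (hηc'.pow _)).mul
      (hgη.norm.pow _)) hηc ?_
    intro x hx; simp [hfE1, hg_out x hx]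
  have iE2 : Integrable fE2 := by
    refine integrable_of ((((cgv _ (by push_cast; linarith)).mul (cv _ (by push_cast; linarith))).mul (hηc'.pow _)).mul
      (hgη.norm.pow _)) hηc ?_
    intro x hx; simp [hfE2, hg_out x hx]
  have iT : Integrable fT := by
    refine integrable_of (rc _ _ hgη.norm hpq.le) hηc ?_
    intro x hx; simp [hfT, hg_out x hx, Real.zero_rpow hpq.ne']
  -- weak formulation
  have key1 : γ * ∫ x, fA x ≤ (∫ x, fB x) + 2 * m * ∫ x, fE1 x := by
    have hγ0 : 0 ≤ γ - 1 := by linarith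
    have hcd : ContDiff ℝ 1 (fun x => sp (γ - 1) (v x) * η x ^ (2 * m)) :=
      ((contDiff_sp hγ0).comp hv).mul (hη.pow _)
    have hφ := hW (fun x => sp (γ - 1) (v x) * η x ^ (2 * m)) hcd
      (hcs_of hηc fun x hx => by simp [hη_out x hx, n2m])
      ((tsupport_sub fun x hx => by simp [hη_out x hx, n2m]).trans hηU)
    have hgrad : ∀ x, gradient (fun x => sp (γ - 1) (v x) * η x ^ (2 * m)) x =
        (γ * |v x| ^ (γ - 1) * η x ^ (2 * m)) • gradient v x +
          (sp (γ - 1) (v x) * (2 * m * η x ^ (2 * m - 1))) • gradient η x := by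
      intro x
      rw [grad_comp_mul (η := fun y => η y ^ (2 * m)) (hvd x) (hasDerivAt_sp hγ0 (v x)) ((hηd x).pow _),
        grad_comp (F := fun t => t ^ (2 * m)) (hηd x) (hasDerivAt_pow (2 * m) (η x)), smul_smul]
      push_cast
      congr 2
      ring
    have hR : (fun x => sp (lam - 1) (v x) * (sp (γ - 1) (v x) * η x ^ (2 * m))) = fB := by
      ext x
      simp only [hfB, sp]
      have : |v x| ^ (lam + γ) = |v x| ^ (lam - 1) * |v x| ^ (γ - 1) * (v x * v x) := by
        rw [← abs_mul_abs_self, ← sq, ← Real.rpow_natCast (|v x|) 2,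
          ← Real.rpow_add_of_nonneg (abs_nonneg _) (by linarith) (by linarith),
          ← Real.rpow_add_of_nonneg (abs_nonneg _) (by linarith) (by norm_num)]
        congr 1; push_cast; ring
      rw [this]; ring
    rw [hR] at hφ
    rw [← hφ]
    have : γ * ∫ x, fA x = ∫ x, γ * fA x := (integral_const_mul _ _).symm
    rw [this, ← integral_const_mul, ← sub_le_iff_le_add, ← integral_sub (iA.const_mul _) (iE1.const_mul _)]
    refine integral_mono ((iA.const_mul _).sub (iE1.const_mul _)) ?_ ?_
    · refine integrable_of ((cgv _ (by linarith)).mul (hgv.inner (continuous_gradient hcd))) hηc ?_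
      intro x hx
      have : gradient (fun x => sp (γ - 1) (v x) * η x ^ (2 * m)) x = 0 := by
        rw [hgrad, hη_out x hx, hg_out x hx]; simp [n2m]
      simp only [this, inner_zero_right, mul_zero]
    · intro x
      simp only [hfA, hfE1]
      rw [hgrad, inner_add_right, inner_smul_right, inner_smul_right, real_inner_self_eq_norm_sq]
      have hpp : ‖gradient v x‖ ^ p = ‖gradient v x‖ ^ (p - 2) * ‖gradient v x‖ ^ 2 := by
        rw [← Real.rpow_natCast ‖gradient v x‖ 2, ← Real.rpow_add_of_nonneg (norm_nonneg _) (by linarith) (by norm_num)]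
        congr 1; push_cast; ring
      have hpp1 : ‖gradient v x‖ ^ (p - (1:ℕ)) = ‖gradient v x‖ ^ (p - 2) * ‖gradient v x‖ := by
        rw [← Real.rpow_add_one' (norm_nonneg _) (by linarith)]
        congr 1; push_cast; ring
      have hb : |v x| ^ (γ - 1 + (1:ℕ)) = |sp (γ - 1) (v x)| := by
        rw [sp, abs_mul, abs_of_nonneg (by positivity : 0 ≤ |v x| ^ (γ - 1)), Nat.cast_one,
          Real.rpow_add_one' (abs_nonneg _) (by linarith)]
      rw [hpp, hpp1, hb]
      have hcs : -(|sp (γ - 1) (v x)| * (‖gradient v x‖ * ‖gradient η x‖)) ≤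
          sp (γ - 1) (v x) * ⟪gradient v x, gradient η x⟫ := by
        refine neg_le_of_abs_le ?_
        rw [abs_mul]
        gcongr
        exact abs_real_inner_le_norm _ _
      have hpos : 0 ≤ ‖gradient v x‖ ^ (p - 2) * (2 * m * η x ^ (2 * m - 1)) := by
        have := hη0 x; positivity
      have := mul_le_mul_of_nonneg_left hcs hpos
      nlinarith [this]
  have key2 : lam * ∫ x, fB x ≤ D * (∫ x, fA x) + (p - 1) * (2 * θ * m) * (∫ x, fE1 x) +
      K2 * ∫ x, fE2 x := by
    have hγ0 : 0 ≤ (γ - 1) / 2 := by linarith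
    have hm0 : m ≠ 0 := by omega
    have hcd : ContDiff ℝ 1 (fun x => sp ((γ - 1) / 2) (v x) * η x ^ m) :=
      ((contDiff_sp hγ0).comp hv).mul (hη.pow _)
    have hφ := hS (fun x => sp ((γ - 1) / 2) (v x) * η x ^ m) hcd
      (hcs_of hηc fun x hx => by simp [hη_out x hx, hm0])
      ((tsupport_sub fun x hx => by simp [hη_out x hx, hm0]).trans hηU)
    have hgrad : ∀ x, gradient (fun x => sp ((γ - 1) / 2) (v x) * η x ^ m) x =
        (θ * |v x| ^ ((γ - 1) / 2) * η x ^ m) • gradient v x +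
          (sp ((γ - 1) / 2) (v x) * (m * η x ^ (m - 1))) • gradient η x := by
      intro x
      rw [grad_comp_mul (η := fun y => η y ^ m) (hvd x) (hasDerivAt_sp hγ0 (v x)) ((hηd x).pow _),
        grad_comp (F := fun t => t ^ m) (hηd x) (hasDerivAt_pow m (η x)), smul_smul]
      congr 3
      rw [hθ]; ring
    set φ := (fun x => sp ((γ - 1) / 2) (v x) * η x ^ m) with hφdef
    have hgφ := continuous_gradient hcd
    have hgφ_out : ∀ x, x ∉ tsupport η → gradient φ x = 0 := by
      intro x hx
      rw [hgrad, hη_out x hx, hg_out x hx]; simp [hm0]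
    have hφ_out : ∀ x, x ∉ tsupport η → φ x = 0 := fun x hx => by simp [φ, hη_out x hx, hm0]
    have hBφ : ∀ x, |v x| ^ (lam - 1) * φ x ^ 2 = fB x := by
      intro x
      simp only [hfB, sp, φ]
      have : |v x| ^ (lam + γ) = |v x| ^ (lam - 1) * (|v x| ^ ((γ - 1)/2) * |v x| ^ ((γ - 1)/2)) * (v x * v x) := by
        rw [← abs_mul_abs_self (v x), ← sq (|v x|), ← Real.rpow_natCast (|v x|) 2,
          ← Real.rpow_add_of_nonneg (abs_nonneg _) (by linarith) (by linarith),
          ← Real.rpow_add_of_nonneg (abs_nonneg _) (by linarith) (by linarith),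
          ← Real.rpow_add_of_nonneg (abs_nonneg _) (by linarith) (by norm_num)]
        congr 1; push_cast; ring
      rw [this]; ring
    have iG : Integrable (fun x => ‖gradient v x‖ ^ (p - 2) * ‖gradient φ x‖ ^ 2) := by
      refine integrable_of ((cgv _ (by linarith)).mul (hgφ.norm.pow 2)) hηc ?_
      intro x hx; simp [hgφ_out x hx]
    have iH : Integrable (fun x => (p - 2) * ‖gradient v x‖ ^ (p - 4) * ⟪gradient v x, gradient φ x⟫ ^ 2) := by
      refine Integrable.mono' (iG.const_mul (p - 1)) ?_ ?_
      · refine Measurable.aestronglyMeasurable ?_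
        have := hgv.measurable
        have h2 := (hgv.inner hgφ (𝕜 := ℝ)).measurable
        exact (measurable_const.mul (this.norm.pow_const _)).mul (h2.pow_const 2)
      · refine Eventually.of_forall fun x => ?_
        have h := stab_pointwise hp (gradient v x) (gradient φ x)
        have h0 : 0 ≤ ‖gradient v x‖ ^ (p - 2) * ‖gradient φ x‖ ^ 2 := by positivity
        have h1 : 0 ≤ (p - 2) * ‖gradient v x‖ ^ (p - 4) * ⟪gradient v x, gradient φ x⟫ ^ 2 := by
          have : 0 ≤ p - 2 := by linarith
          positivity
        rw [Real.norm_of_nonneg h1]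
        linarith
    have hle : (0:ℝ) ≤ ∫ x, (D * fA x + (p - 1) * (2 * θ * m) * fE1 x + K2 * fE2 x - lam * fB x) := by
      refine hφ.trans ?_
      refine integral_mono (iG.add (iH.sub ?_)) ((((iA.const_mul _).add (iE1.const_mul _)).add
        (iE2.const_mul _)).sub (iB.const_mul _)) ?_
      · have : (fun x => lam * |v x| ^ (lam - 1) * φ x ^ 2) = fun x => lam * fB x := by
          ext x; rw [← hBφ]; ring
        rw [this]; exact iB.const_mul _
      · intro x
        have h := stab_pointwise hp (gradient v x) (gradient φ x)
        have hB : lam * |v x| ^ (lam - 1) * φ x ^ 2 = lam * fB x := by rw [← hBφ]; ring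
        simp only
        rw [hB]
        have hn : ‖gradient φ x‖ ≤ θ * |v x| ^ ((γ - 1) / 2) * η x ^ m * ‖gradient v x‖ +
            |v x| ^ ((γ - 1) / 2) * |v x| * (m * η x ^ (m - 1)) * ‖gradient η x‖ := by
          rw [hgrad]
          refine (norm_add_le _ _).trans (le_of_eq ?_)
          rw [norm_smul, norm_smul, sp]
          have h0 := hη0 x
          simp only [norm_mul, Real.norm_eq_abs, abs_of_nonneg (by linarith : (0:ℝ) ≤ θ),
            abs_of_nonneg (by positivity : 0 ≤ |v x| ^ ((γ - 1)/2)),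
            abs_of_nonneg (pow_nonneg h0 _), Nat.abs_cast]
        have hn2 : ‖gradient φ x‖ ^ 2 ≤ _ := pow_le_pow_left₀ (norm_nonneg _) hn 2
        have hn3 : ‖gradient v x‖ ^ (p - 2) * ‖gradient φ x‖ ^ 2 ≤ 
            θ ^ 2 * fA x + 2 * θ * m * fE1 x + m ^ 2 * fE2 x := by
          refine (mul_le_mul_of_nonneg_left hn2 (by positivity)).trans (le_of_eq ?_)
          have hpp : ‖gradient v x‖ ^ p = ‖gradient v x‖ ^ (p - 2) * ‖gradient v x‖ ^ 2 := by
            rw [← Real.rpow_natCast ‖gradient v x‖ 2, ← Real.rpow_add_of_nonneg (norm_nonneg _) (by linarith) (by norm_num)]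
            congr 1; push_cast; ring
          have hpp1 : ‖gradient v x‖ ^ (p - (1:ℕ)) = ‖gradient v x‖ ^ (p - 2) * ‖gradient v x‖ := by
            rw [← Real.rpow_add_one' (norm_nonneg _) (by linarith)]
            congr 1; push_cast; ring
          have hpp2 : ‖gradient v x‖ ^ (p - (2:ℕ)) = ‖gradient v x‖ ^ (p - 2) := by norm_num
          have hb0 : |v x| ^ (γ - 1) = |v x| ^ ((γ - 1)/2) * |v x| ^ ((γ - 1)/2) := by
            rw [← Real.rpow_add_of_nonneg (abs_nonneg _) (by linarith) (by linarith)]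
            congr 1; ring
          have hb1 : |v x| ^ (γ - 1 + (1:ℕ)) = |v x| ^ (γ - 1) * |v x| := by
            rw [Nat.cast_one, Real.rpow_add_one' (abs_nonneg _) (by linarith)]
          have hb2 : |v x| ^ (γ - 1 + (2:ℕ)) = |v x| ^ (γ - 1) * |v x| ^ 2 := by
            rw [Real.rpow_add_of_nonneg (abs_nonneg _) (by linarith) (by norm_num), Real.rpow_natCast]
          obtain ⟨k, rfl⟩ : ∃ k, m = k + 1 := ⟨m - 1, by omega⟩
          have e1 : 2 * (k + 1) - 1 = 2 * k + 1 := by omega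
          have e2 : 2 * (k + 1) - 2 = 2 * k := by omega
          simp only [hfA, hfE1, hfE2]
          rw [hpp, hpp1, hpp2, hb1, hb2, hb0, e1, e2, Nat.add_sub_cancel]
          ring
        have := mul_le_mul_of_nonneg_left hn3 hp1.le
        rw [hD, hK2]
        nlinarith [this, h]
    rw [integral_lin4 iA iE1 iE2 iB] at hle
    linarith
  have key3 : ∫ x, fE1 x ≤ ε * ((∫ x, fA x) + ∫ x, fB x) + C1 * ∫ x, fT x := by
    refine integral_le3 iA iB iT iE1 _ _ fun x => ?_
    exact H1 _ _ _ _ (norm_nonneg _) (abs_nonneg _) (hη0 x) (hη1 x) (norm_nonneg _)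
  have key4 : ∫ x, fE2 x ≤ ε * ((∫ x, fA x) + ∫ x, fB x) + C2 * ∫ x, fT x := by
    refine integral_le3 iA iB iT iE2 _ _ fun x => ?_
    exact H2 _ _ _ _ (norm_nonneg _) (abs_nonneg _) (hη0 x) (hη1 x) (norm_nonneg _)
  have pA : 0 ≤ ∫ x, fA x := integral_nonneg fun x => by
    have := hη0 x; simp only [hfA, Pi.zero_apply]; positivity
  have pB : 0 ≤ ∫ x, fB x := integral_nonneg fun x => by
    have := hη0 x; simp only [hfB, Pi.zero_apply]; positivity
  have s1 := mul_le_mul_of_nonneg_left key1 hw0.le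
  have s3 := mul_le_mul_of_nonneg_left key3 hK1p.le
  have s4 := mul_le_mul_of_nonneg_left key4 hK2p.le
  generalize (∫ x, fA x) = IA at *
  generalize (∫ x, fB x) = IB at *
  generalize (∫ x, fE1 x) = I1 at *
  generalize (∫ x, fE2 x) = I2 at *
  generalize (∫ x, fT x) = IT at *
  have t1 : (lam - w) * IB + (w * γ - D) * IA ≤ K1 * I1 + K2 * I2 := by
    rw [hK1]; nlinarith [s1, key2]
  have t2 : c0 * IB ≤ (lam - w) * IB := mul_le_mul_of_nonneg_right (min_le_left _ _) pB
  have t3 : c0 * IA ≤ (w * γ - D) * IA := mul_le_mul_of_nonneg_right (min_le_right _ _) pA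
  have t4 : K1 * I1 + K2 * I2 ≤ c0 / 2 * (IA + IB) + (K1 * C1 + K2 * C2) * IT := by
    rw [← hεc]; nlinarith [s3, s4]
  rw [div_mul_eq_mul_div, le_div_iff₀ (by positivity)]
  nlinarith

end SES

namespace SES
open Set Filter Topology
variable {N : ℕ}

lemma gamma_aux {A p c μ S s : ℝ} (hp : 2 < p) (hc : 0 < c) (hμ : 0 < μ) (hS : 0 < S)
    (hS2 : S ^ 2 = (μ + c) * μ) (hs : 0 ≤ s) (hs2 : s ^ 2 = A + 1 + p ^ 2)
    (hA : 2 * p < A → μ * ((A + 2 * p) * (A - 2 * p)) < c * (p ^ 2 * (A + 2 + 2 * s))) :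
    A * μ < p ^ 2 * c + 2 * p * S := by
  have hSμ : μ < S := by
    by_contra h; push Not at h
    have : S ^ 2 ≤ μ ^ 2 := by gcongr
    nlinarith [mul_pos hμ hc]
  by_cases h : A ≤ 2 * p
  · have : A * μ ≤ 2 * p * μ := by gcongr
    have h2 : 2 * p * μ < 2 * p * S := by gcongr
    have : 0 < p ^ 2 * c := by positivity
    linarith
  · push Not at h
    have hA' := hA h
    by_contra hcon
    push Not at hcon
    have hp0 : 0 < p := by linarith
    have h1 : p ^ 2 * c < (A - 2 * p) * μ := by
      have h2 : 2 * p * μ < 2 * p * S := by gcongr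
      linarith
    set W := (A + 2 * p) * (A - 2 * p) with hW
    have hWp : 0 < W := mul_pos (by linarith) (by linarith)
    have h3 : p ^ 2 * c * (A + 2 * p) < W * μ := by
      have := mul_lt_mul_of_pos_left h1 (by linarith : 0 < A + 2 * p)
      rw [hW]; linarith
    have hsq : (2 * p * S) ^ 2 ≤ (A * μ - p ^ 2 * c) ^ 2 := by
      have : 0 < 2 * p * S := by positivity
      gcongr
      linarith
    have hquad : 0 ≤ W * μ ^ 2 - 2 * (p ^ 2 * c * (A + 2)) * μ + (p ^ 2 * c) ^ 2 := by
      have : (2 * p * S) ^ 2 = 4 * p ^ 2 * ((μ + c) * μ) := by rw [← hS2]; ring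
      rw [this] at hsq
      rw [hW]; linarith
    have hquad2 : (p ^ 2 * c * (2 * s)) ^ 2 ≤ (W * μ - p ^ 2 * c * (A + 2)) ^ 2 := by
      have h5 := mul_nonneg hWp.le hquad
      have h6 : (p ^ 2 * c * (2 * s)) ^ 2 = (p ^ 2 * c) ^ 2 * ((A + 2) ^ 2 - W) := by
        have : (p ^ 2 * c * (2 * s)) ^ 2 = (p ^ 2 * c) ^ 2 * (4 * s ^ 2) := by ring
        rw [this, hs2, hW]; ring
      rw [h6]; linarith
    have hpos : 0 ≤ p ^ 2 * c * (2 * s) := by positivity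
    have h7 := sq_le_sq.1 hquad2
    rw [abs_of_nonneg hpos] at h7
    have hpc : 0 < p ^ 2 * c := by positivity
    rcases le_abs.1 h7 with h8 | h8
    · nlinarith
    · have : p ^ 2 * c * (A + 2 * p) < p ^ 2 * c * (A + 2 - 2 * s) := by linarith
      have := lt_of_mul_lt_mul_left this hpc.le
      linarith

lemma exists_gamma (N : ℕ) {p lam : ℝ} (hp : 2 < p) (hlam₁ : p - 1 < lam)
    (hlam₂ : (N : ℝ) > p * (p + 3) / (p - 1) → lam < LambdaC N p) (hN : 1 ≤ N) :
    ∃ γ : ℝ, 1 ≤ γ ∧ (p - 1) * ((γ + 1) / 2) ^ 2 < lam * γ ∧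
      (N : ℝ) < p * ((lam + γ) / (lam - p + 1)) := by
  have hN' : (1:ℝ) ≤ N := by exact_mod_cast hN
  obtain ⟨c, hc⟩ : ∃ c, c = p - 1 := ⟨_, rfl⟩
  obtain ⟨μ, hμ⟩ : ∃ μ, μ = lam - p + 1 := ⟨_, rfl⟩
  obtain ⟨A, hA⟩ : ∃ A, A = c * N - p * (p + 1) := ⟨_, rfl⟩
  have hcp : 0 < c := by linarith
  have hμp : 0 < μ := by linarith
  have hl : lam = μ + c := by rw [hμ, hc]; ring
  obtain ⟨S, hS⟩ : ∃ S, S = Real.sqrt ((μ + c) * μ) := ⟨_, rfl⟩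
  obtain ⟨s, hs⟩ : ∃ s, s = Real.sqrt ((p - 1) * (N - 1)) := ⟨_, rfl⟩
  have hSp : 0 < S := by rw [hS]; positivity
  have hS2 : S ^ 2 = (μ + c) * μ := by rw [hS, Real.sq_sqrt (by positivity)]
  have hs0 : 0 ≤ s := by rw [hs]; positivity
  have hs2 : s ^ 2 = A + 1 + p ^ 2 := by
    rw [hs, Real.sq_sqrt (mul_nonneg (by linarith) (by linarith)), hA, hc]; ring
  have hSμ : μ < S := by
    by_contra h; push Not at h
    have : S ^ 2 ≤ μ ^ 2 := by gcongr
    nlinarith [mul_pos hμp hcp]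
  have main : A * μ < p ^ 2 * c + 2 * p * S := by
    refine gamma_aux hp hcp hμp hSp hS2 hs0 hs2 fun h => ?_
    have hbig : (N : ℝ) > p * (p + 3) / (p - 1) := by
      rw [gt_iff_lt, div_lt_iff₀ (by linarith)]
      rw [hA, hc] at h; nlinarith
    have hL := hlam₂ hbig
    unfold LambdaC at hL
    rw [← hs] at hL
    have hNp : c * ((N:ℝ) - p) = A + 2 * p := by rw [hA, hc]; ring
    have hNp' : 0 < (N:ℝ) - p := by
      have : 0 < c * ((N:ℝ) - p) := by rw [hNp]; linarith
      exact (pos_iff_pos_of_mul_pos this).1 hcp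
    have hA2 : (p - 1) * (N:ℝ) - p * (p + 3) = A - 2 * p := by rw [hA, hc]; ring
    rw [hA2, lt_div_iff₀ (mul_pos hNp' (by linarith))] at hL
    have e1 : (p - 1) * (N:ℝ) = A + p ^ 2 + p := by rw [hA, hc]; ring
    have e2 : p ^ 2 * (p - 1) * (N:ℝ) = p ^ 2 * (A + p ^ 2 + p) := by rw [← e1]; ring
    rw [e1, e2] at hL
    have h3 := mul_lt_mul_of_pos_left hL hcp
    have h4 : c * (lam * ((N - p) * (A - 2 * p))) = lam * ((A + 2 * p) * (A - 2 * p)) := by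
      rw [← hNp]; ring
    rw [h4, hl] at h3
    nlinarith [h3]
  set g := (2 * lam - c + 2 * S) / c with hg
  have hg1 : 1 < g := by rw [hg, lt_div_iff₀ hcp]; linarith
  have hg2 : N * μ / p - lam < g := by
    rw [hg, lt_div_iff₀ hcp]
    have hcg : (N * μ / p - lam) * c = (c * N * μ) / p - lam * c := by field_simp
    have hcN : c * N = A + p * (p + 1) := by rw [hA]; ring
    rw [hcg, hcN, sub_lt_iff_lt_add, div_lt_iff₀ (by linarith), hl]
    have hp' : p = c + 1 := by rw [hc]; ring
    have : (2 * (μ + c) - c + 2 * S + (μ + c) * c) * p =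
       p * (p + 1) * μ + p ^ 2 * c + 2 * p * S := by rw [hp']; ring
    rw [this]; linarith
  obtain ⟨γ, h1, h2⟩ := exists_between (max_lt hg1 hg2)
  have hγ1 : 1 < γ := (le_max_left _ _).trans_lt h1
  have hγ2 := (le_max_right _ _).trans_lt h1
  refine ⟨γ, hγ1.le, ?_, ?_⟩
  · have h3 : 0 < (2 * lam - c + 2 * S) - c * γ := by
      rw [hg, lt_div_iff₀ hcp] at h2; linarith
    have h4 : 0 < c * γ - (2 * lam - c - 2 * S) := by nlinarith
    have h5 := mul_pos h3 h4
    have h6 : ((2 * lam - c + 2 * S) - c * γ) * (c * γ - (2 * lam - c - 2 * S)) =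
        c * (4 * lam * γ - c * (γ + 1) ^ 2) := by
      have : 4 * S ^ 2 = 4 * (lam * (lam - c)) := by rw [hS2, hl]; ring
      linear_combination this
    rw [h6] at h5
    have h7 := (pos_iff_pos_of_mul_pos h5).1 hcp
    rw [← hc]; nlinarith
  · rw [← hμ, ← mul_div_assoc, lt_div_iff₀ hμp]
    have := sub_lt_iff_lt_add.1 hγ2
    rw [div_lt_iff₀ (by linarith)] at this
    linarith
end SES

namespace SES
open Set Filter Topology
variable {N : ℕ}

lemma integral_ge_of_ball {f : E N → ℝ} (hf : Integrable f) (h0 : ∀ x, 0 ≤ f x) {x0 : E N} {r c : ℝ}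
    (h : ∀ y ∈ ball x0 r, c ≤ f y) : c * volume.real (ball (0 : E N) r) ≤ ∫ x, f x := by
  have h1 : ∫ x in ball x0 r, f x ≤ ∫ x, f x :=
    setIntegral_le_integral hf (Eventually.of_forall h0)
  refine le_trans ?_ h1
  have h2 : ∫ x in ball x0 r, c ≤ ∫ x in ball x0 r, f x :=
    setIntegral_mono_on (integrableOn_const (measure_ball_lt_top).ne) hf.integrableOn
      measurableSet_ball h
  refine le_trans (le_of_eq ?_) h2
  rw [setIntegral_const, smul_eq_mul, Measure.addHaar_real_ball_center volume x0 r, mul_comm]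

lemma gradient_comp_smul {f : E N → ℝ} (hf : Differentiable ℝ f) (c : ℝ) (x : E N) :
    gradient (fun y => f (c • y)) x = c • gradient f (c • x) := by
  apply HasGradientAt.gradient
  rw [hasGradientAt_iff_hasFDerivAt]
  have h1 : HasFDerivAt (fun y : E N => c • y) (c • ContinuousLinearMap.id ℝ (E N)) x :=
    (hasFDerivAt_id x).const_smul c
  refine ((hf (c • x)).hasFDerivAt.comp x h1).congr_fderiv ?_
  ext y
  simp

lemma exists_cutoff (R : ℝ) (hR : 0 < R) : ∃ η : E N → ℝ, ContDiff ℝ 1 η ∧ HasCompactSupport η ∧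
    tsupport η ⊆ closedBall 0 (2 * R) ∧ (∀ x, 0 ≤ η x) ∧ (∀ x, η x ≤ 1) ∧
    (∀ x ∈ closedBall (0 : E N) R, η x = 1) := by
  let b : ContDiffBump (0 : E N) := ⟨R, 2 * R, hR, by linarith⟩
  exact ⟨b, b.contDiff, b.hasCompactSupport, b.tsupport_eq.subset, fun x => b.nonneg,
    fun x => b.le_one, fun x hx => b.one_of_mem_closedBall hx⟩

lemma exists_scaled_cutoff (s : ℝ) (hs : 0 < s) : ∃ I : ℝ, 0 ≤ I ∧ ∀ R : ℝ, 0 < R →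
    ∃ η : E N → ℝ, ContDiff ℝ 1 η ∧ HasCompactSupport η ∧
    tsupport η ⊆ closedBall 0 (2 * R) ∧ (∀ x, 0 ≤ η x) ∧ (∀ x, η x ≤ 1) ∧
    (∀ x ∈ closedBall (0 : E N) R, η x = 1) ∧
    ∫ x, ‖gradient η x‖ ^ s = I * R ^ (N - s) := by
  obtain ⟨η, h1, h2, h3, h4, h5, h6⟩ := exists_cutoff (N := N) 1 one_pos
  refine ⟨∫ x, ‖gradient η x‖ ^ s, integral_nonneg fun x => by positivity, fun R hR => ?_⟩
  have hcs : tsupport (fun x => η (R⁻¹ • x)) ⊆ closedBall 0 (2 * R) := by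
    refine closure_minimal (fun x hx => ?_) isClosed_closedBall
    have : R⁻¹ • x ∈ closedBall (0 : E N) (2 * 1) := h3 (subset_closure hx)
    rw [mem_closedBall_zero_iff, norm_smul, norm_inv, Real.norm_of_nonneg hR.le] at this
    rw [mem_closedBall_zero_iff]
    rw [inv_mul_le_iff₀ hR] at this
    linarith
  refine ⟨fun x => η (R⁻¹ • x), h1.comp (contDiff_const_smul _), ?_, hcs, fun x => h4 _, fun x => h5 _, ?_, ?_⟩
  · exact HasCompactSupport.of_support_subset_isCompact (isCompact_closedBall 0 (2 * R))
      (subset_closure.trans hcs)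
  · intro x hx
    apply h6
    rw [mem_closedBall_zero_iff] at hx ⊢
    rw [norm_smul, norm_inv, Real.norm_of_nonneg hR.le, inv_mul_le_iff₀ hR]
    linarith
  · have e : ∀ x, ‖gradient (fun x => η (R⁻¹ • x)) x‖ ^ s =
        R ^ (-s) * ‖gradient η (R⁻¹ • x)‖ ^ s := by
      intro x
      rw [gradient_comp_smul (h1.differentiable one_ne_zero), norm_smul, norm_inv,
        Real.norm_of_nonneg hR.le, Real.mul_rpow (by positivity) (by positivity),
        Real.inv_rpow hR.le, Real.rpow_neg hR.le]
    simp_rw [e]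
    have e2 := Measure.integral_comp_inv_smul volume (fun y : E N => ‖gradient η y‖ ^ s) R
    rw [integral_const_mul, e2, finrank_euclideanSpace_fin,
      abs_of_pos (by positivity), smul_eq_mul, Real.rpow_sub hR, Real.rpow_natCast,
      Real.rpow_neg hR.le]
    field_simp

lemma small_of_stable {p lam γ : ℝ} (hp : 2 < p) (hlam : p - 1 < lam) (hγ : 1 ≤ γ)
    (hcond : (p - 1) * ((γ + 1) / 2) ^ 2 < lam * γ)
    (hN : (N : ℝ) < p * ((lam + γ) / (lam - p + 1))) {K δ : ℝ} (hK : 0 < K) (hδ : 0 < δ) :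
    ∃ R0 : ℝ, 4 < R0 ∧ ∀ v : E N → ℝ, ContDiff ℝ 1 v → Weak p lam (ball 0 R0) v →
      Stab p lam (ball 0 R0) v → (∀ x ∈ ball (0 : E N) R0, ‖gradient v x‖ ≤ K) →
      ∀ x ∈ ball (0 : E N) 4, |v x| ≤ δ := by
  obtain ⟨C, hC, m, hm, H⟩ := integral_est (N := N) hp hlam hγ hcond
  set s := p * ((lam + γ) / (lam - p + 1)) with hs
  have hs0 : 0 < s := lt_of_le_of_lt (Nat.cast_nonneg N) hN
  obtain ⟨I, hI, HI⟩ := exists_scaled_cutoff (N := N) s hs0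
  set r := min 1 (δ / (2 * K)) with hr
  have hrp : 0 < r := lt_min one_pos (by positivity)
  set V := volume.real (ball (0 : E N) r) with hV
  have hVp : 0 < V := by
    rw [hV]; exact ENNReal.toReal_pos (measure_ball_pos _ _ hrp).ne' measure_ball_lt_top.ne
  have hlim : Tendsto (fun R : ℝ => C * (I * R ^ (-(s - N)))) atTop (𝓝 (C * (I * 0))) :=
    ((tendsto_rpow_neg_atTop (by linarith)).const_mul _).const_mul _
  rw [mul_zero, mul_zero] at hlim
  have hpos : 0 < (δ / 2) ^ (lam + γ) * V := by positivity
  obtain ⟨R, hR1, hR5⟩ := ((hlim.eventually (gt_mem_nhds hpos)).and (eventually_ge_atTop 5)).exists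
  refine ⟨3 * R, by linarith, fun v hv hW hS hg x0 hx0 => ?_⟩
  obtain ⟨η, h1, h2, h3, h4, h5, h6, h7⟩ := HI R (by linarith)
  have hest := H _ v hv hW hS η h1 h2 (h3.trans (closedBall_subset_ball (by linarith))) h4 h5
  rw [h7] at hest
  have : (N:ℝ) - s = -(s - N) := by ring
  rw [this] at hest
  by_contra hcon
  push Not at hcon
  have hIntg : Integrable (fun x => |v x| ^ (lam + γ) * η x ^ (2 * m)) := by
    refine Continuous.integrable_of_hasCompactSupport ?_ ?_
    · exact (hv.continuous.abs.rpow_const fun _ => Or.inr (by linarith)).mul (h1.continuous.pow _)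
    · exact hcs_of h2 fun x hx => by
        simp [image_eq_zero_of_notMem_tsupport hx, hm.ne']
  have hlow := integral_ge_of_ball hIntg (fun x => by have := h4 x; positivity) (x0 := x0) (r := r)
    (c := (δ / 2) ^ (lam + γ)) ?_
  · linarith
  · intro y hy
    have hy1 : dist y x0 < r := hy
    have hyr : ‖y - x0‖ ≤ δ / (2 * K) := by
      rw [← dist_eq_norm]; exact hy1.le.trans (min_le_right _ _)
    have hx0' : ‖x0‖ < 4 := by simpa using hx0
    have hy5 : ‖y‖ < 5 := by
      have : ‖y‖ ≤ ‖y - x0‖ + ‖x0‖ := by simpa using norm_add_le (y - x0) x0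
      have h1 : ‖y - x0‖ < 1 := by rw [← dist_eq_norm]; exact hy1.trans_le (min_le_left _ _)
      linarith
    have hlip := (convex_ball (0 : E N) (3 * R)).norm_image_sub_le_of_norm_fderiv_le (𝕜 := ℝ) (f := v) (C := K)
      (fun x _ => hv.differentiable one_ne_zero x) (fun x hx => by rw [← norm_gradient]; exact hg x hx)
      (x := x0) (y := y) (by simp; linarith) (by simp; linarith)
    have h8 : K * ‖y - x0‖ ≤ δ / 2 := by
      calc _ ≤ K * (δ / (2 * K)) := by gcongr
        _ = δ / 2 := by field_simp
    have h9 : |v x0| - |v y| ≤ ‖v y - v x0‖ := by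
      rw [Real.norm_eq_abs, abs_sub_comm]; exact abs_sub_abs_le_abs_sub _ _
    rw [h6 y (by simp; linarith), one_pow, mul_one]
    have : δ / 2 ≤ |v y| := by linarith
    gcongr
    linarith

end SES

namespace SES
open Set Filter Topology
variable {N : ℕ}

lemma lintegral_grad_eq {g : E N → ℝ} (hg : ContDiff ℝ 1 g) (hc : HasCompactSupport g) :
    ∫⁻ x, ‖fderiv ℝ g x‖ₑ = ENNReal.ofReal (∫ x, ‖gradient g x‖) := by
  rw [ofReal_integral_eq_lintegral_ofReal]
  · congr 1 with x
    rw [norm_gradient, ofReal_norm_eq_enorm]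
  · exact integrable_of (continuous_gradient hg).norm hc fun x hx => by
      rw [gradient_eq_zero_of_notMem hx, norm_zero]
  · exact Eventually.of_forall fun x => norm_nonneg _

lemma integral_rpow_le_of {g : E N → ℝ} (hg : ContDiff ℝ 1 g) (hc : HasCompactSupport g)
    (h0 : ∀ x, 0 ≤ g x) {χ C : ℝ} (hχ : 1 < χ) (hC : 0 ≤ C)
    (h : ∫⁻ x, ‖g x‖ₑ ^ χ ≤ ENNReal.ofReal C * (∫⁻ x, ‖fderiv ℝ g x‖ₑ) ^ χ) :
    ∫ x, g x ^ χ ≤ C * (∫ x, ‖gradient g x‖) ^ χ := by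
  have hI : 0 ≤ ∫ x, ‖gradient g x‖ := integral_nonneg fun x => norm_nonneg _
  rw [lintegral_grad_eq hg hc, ENNReal.ofReal_rpow_of_nonneg hI (by linarith),
    ← ENNReal.ofReal_mul hC] at h
  have e : ∫⁻ x, ‖g x‖ₑ ^ χ = ENNReal.ofReal (∫ x, g x ^ χ) := by
    rw [ofReal_integral_eq_lintegral_ofReal]
    · congr 1 with x
      rw [← ofReal_norm_eq_enorm, Real.norm_of_nonneg (h0 x),
        ENNReal.ofReal_rpow_of_nonneg (h0 x) (by linarith)]
    · exact integrable_of (hg.continuous.rpow_const fun x => Or.inr (by linarith)) hc fun x hx => by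
        rw [image_eq_zero_of_notMem_tsupport hx, Real.zero_rpow (by linarith)]
    · exact Eventually.of_forall fun x => Real.rpow_nonneg (h0 x) _
  rw [e] at h
  exact (ENNReal.ofReal_le_ofReal_iff (by positivity)).1 h

lemma sobolev_one : ∃ χ : ℝ, 1 < χ ∧ ∃ C : ℝ, 0 ≤ C ∧ ∀ g : E 1 → ℝ, ContDiff ℝ 1 g →
    HasCompactSupport g → (∀ x, 0 ≤ g x) → tsupport g ⊆ closedBall 0 4 →
    ∫ x, g x ^ χ ≤ C * (∫ x, ‖gradient g x‖) ^ χ := by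
  set V := volume.real (closedBall (0 : E 1) 4) with hV
  refine ⟨2, by norm_num, V, by positivity, fun g hg hc h0 hs => ?_⟩
  refine integral_rpow_le_of hg hc h0 (by norm_num) (by positivity) ?_
  let e : ℝ ≃ₗᵢ[ℝ] E 1 := (OrthonormalBasis.singleton (Fin 1) ℝ).repr
  have hp : ∀ x, ‖g x‖ₑ ≤ ∫⁻ x, ‖fderiv ℝ g x‖ₑ := by
    intro x
    obtain ⟨t, rfl⟩ := e.surjective x
    have h1 : ContDiff ℝ 1 (fun t => g (e t)) := hg.comp e.toContinuousLinearEquiv.contDiff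
    have h2 : HasCompactSupport (fun t => g (e t)) := hc.comp_homeomorph e.toHomeomorph
    refine (h2.enorm_le_lintegral_Ici_deriv h1 t).trans ?_
    refine (setLIntegral_le_lintegral _ _).trans ?_
    rw [← (e.measurePreserving).lintegral_comp (f := fun x => ‖fderiv ℝ g x‖ₑ)
      (hg.continuous_fderiv one_ne_zero).enorm.measurable]
    refine lintegral_mono fun s => ?_
    have hd : HasDerivAt (fun t => g (e t)) (fderiv ℝ g (e s) (e 1)) s := by
      have := ((hg.differentiable one_ne_zero (e s)).hasFDerivAt).comp_hasDerivAt s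
        (e.toContinuousLinearEquiv.hasFDerivAt (x := s)).hasDerivAt
      simp only [ContinuousLinearEquiv.coe_coe, LinearIsometryEquiv.coe_toContinuousLinearEquiv] at this
      exact this
    rw [hd.deriv]
    have := (fderiv ℝ g (e s)).le_opENorm (e 1)
    refine this.trans (le_of_eq ?_)
    rw [← ofReal_norm_eq_enorm (e 1), e.norm_map]
    simp
  calc ∫⁻ x, ‖g x‖ₑ ^ (2:ℝ) ≤ ∫⁻ x in closedBall (0 : E 1) 4, (∫⁻ x, ‖fderiv ℝ g x‖ₑ) ^ (2:ℝ) := by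
        rw [← lintegral_indicator measurableSet_closedBall]
        refine lintegral_mono fun x => ?_
        by_cases hx : x ∈ closedBall (0 : E 1) 4
        · rw [indicator_of_mem hx]
          exact ENNReal.rpow_le_rpow (hp x) (by norm_num)
        · rw [image_eq_zero_of_notMem_tsupport (fun h => hx (hs h))]
          simp
    _ = _ := by
        rw [setLIntegral_const, mul_comm, hV, Measure.real, ENNReal.ofReal_toReal]
        exact measure_closedBall_lt_top.ne

lemma sobolev (hN : 1 ≤ N) : ∃ χ : ℝ, 1 < χ ∧ ∃ C : ℝ, 0 ≤ C ∧ ∀ g : E N → ℝ, ContDiff ℝ 1 g →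
    HasCompactSupport g → (∀ x, 0 ≤ g x) → tsupport g ⊆ closedBall 0 4 →
    ∫ x, g x ^ χ ≤ C * (∫ x, ‖gradient g x‖) ^ χ := by
  rcases hN.eq_or_lt with rfl | hN
  · exact sobolev_one
  · have hN' : (1:ℝ) < N := by exact_mod_cast hN
    have hh := Real.HolderConjugate.conjExponent hN'
    refine ⟨Real.conjExponent N, hh.symm.lt,
      lintegralPowLePowLIntegralFDerivConst (volume : Measure (E N)) (Real.conjExponent N),
      NNReal.coe_nonneg _, fun g hg hc h0 hs => ?_⟩
    refine integral_rpow_le_of hg hc h0 hh.symm.lt (NNReal.coe_nonneg _) ?_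
    rw [ENNReal.ofReal_coe_nnreal]
    apply lintegral_pow_le_pow_lintegral_fderiv volume hg hc
    rw [finrank_euclideanSpace_fin]
    exact hh

end SES

namespace SES
open Set Filter Topology
variable {N : ℕ}

lemma fast_conv {D b α : ℝ} (hD : 0 < D) (hb : 1 < b) (hα : 0 < α) : ∃ ε0 : ℝ, 0 < ε0 ∧
    ∀ Y : ℕ → ℝ, (∀ j, 0 ≤ Y j) → (∀ j, Y (j + 1) ≤ D * b ^ j * (Y j) ^ (1 + α)) → Y 0 ≤ ε0 →
      Tendsto Y atTop (𝓝 0) := by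
  have hb0 : 0 < b := by linarith
  set θ := b ^ (-(1 / α)) with hθ
  have hθ0 : 0 < θ := by positivity
  have hθ1 : θ < 1 := Real.rpow_lt_one_of_one_lt_of_neg hb (by simpa using hα)
  have hθb : θ ^ α = b⁻¹ := by
    rw [hθ, ← Real.rpow_mul hb0.le, ← Real.rpow_neg_one]
    congr 1; field_simp
  refine ⟨(θ / D) ^ (1 / α), by positivity, fun Y h0 h1 h2 => ?_⟩
  have h3 : D * (Y 0) ^ α ≤ θ := by
    have : (Y 0) ^ α ≤ ((θ / D) ^ (1 / α)) ^ α := Real.rpow_le_rpow (h0 0) h2 hα.le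
    rw [← Real.rpow_mul (by positivity), one_div_mul_cancel hα.ne', Real.rpow_one] at this
    calc D * (Y 0) ^ α ≤ D * (θ / D) := by gcongr
      _ = θ := by field_simp
  have key : ∀ j, Y j ≤ θ ^ j * Y 0 := by
    intro j
    induction j with
    | zero => simp
    | succ j ih =>
      have hα' : (Y j) ^ α ≤ (b⁻¹) ^ j * (Y 0) ^ α := by
        calc (Y j) ^ α ≤ (θ ^ j * Y 0) ^ α := Real.rpow_le_rpow (h0 j) ih hα.le
          _ = (b⁻¹) ^ j * (Y 0) ^ α := by
            rw [Real.mul_rpow (by positivity) (h0 0), ← hθb, ← Real.rpow_natCast, ← Real.rpow_natCast,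
              ← Real.rpow_mul hθ0.le, ← Real.rpow_mul hθ0.le, mul_comm α]
      calc Y (j + 1) ≤ D * b ^ j * (Y j) ^ (1 + α) := h1 j
        _ = D * b ^ j * (Y j) ^ α * Y j := by
            rw [Real.rpow_add_of_nonneg (h0 j) zero_le_one hα.le, Real.rpow_one]; ring
        _ ≤ D * b ^ j * ((b⁻¹) ^ j * (Y 0) ^ α) * (θ ^ j * Y 0) := by
            have := h0 j
            have := h0 0
            gcongr
        _ = (D * (Y 0) ^ α) * (θ ^ j * Y 0) := by
            rw [inv_pow]; field_simp
        _ ≤ θ * (θ ^ j * Y 0) := by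
            have := h0 0
            gcongr
        _ = θ ^ (j + 1) * Y 0 := by ring
  refine squeeze_zero h0 key ?_
  have := (tendsto_pow_atTop_nhds_zero_of_lt_one hθ0.le hθ1).mul_const (Y 0)
  simpa using this

noncomputable def cutF (s : ℝ) : ℝ := (max (1 - (max s 0) ^ 2) 0) ^ 2

lemma cutF_hasDerivAt (s : ℝ) :
    HasDerivAt cutF (-(4 * max (1 - (max s 0) ^ 2) 0 * max s 0)) s := by
  have h1 := hasDerivAt_pos_pow 1 le_rfl s
  have h2 := hasDerivAt_pos_pow 1 le_rfl (1 - (max s 0) ^ 2)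
  have h3 := h2.comp s (h1.const_sub 1)
  refine HasDerivAt.congr_deriv (f := cutF) h3 ?_
  simp; ring

lemma cutF_contDiff : ContDiff ℝ 1 cutF := by
  rw [contDiff_one_iff_deriv]
  refine ⟨fun t => (cutF_hasDerivAt t).differentiableAt, ?_⟩
  have : deriv cutF = fun s => -(4 * max (1 - (max s 0) ^ 2) 0 * max s 0) := by
    ext t; exact (cutF_hasDerivAt t).deriv
  rw [this]
  fun_prop

lemma cut_exists {r R : ℝ} (hr : 0 < r) (hrR : r < R) (hR : R ≤ 2) : ∃ η : E N → ℝ,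
    ContDiff ℝ 1 η ∧ HasCompactSupport η ∧
    tsupport η ⊆ closedBall 0 R ∧ (∀ x, 0 ≤ η x) ∧ (∀ x, η x ≤ 1) ∧
    (∀ x ∈ closedBall (0 : E N) r, η x = 1) ∧ (∀ x, ‖gradient η x‖ ≤ 16 / (R ^ 2 - r ^ 2)) := by
  have hd : 0 < R ^ 2 - r ^ 2 := by nlinarith
  have hs : tsupport (fun x : E N => cutF ((‖x‖ ^ 2 - r ^ 2) / (R ^ 2 - r ^ 2))) ⊆ closedBall 0 R := by
    refine closure_minimal (fun x hx => ?_) isClosed_closedBall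
    by_contra h
    apply hx
    rw [mem_closedBall_zero_iff, not_le] at h
    have : 1 ≤ (‖x‖ ^ 2 - r ^ 2) / (R ^ 2 - r ^ 2) := by
      rw [le_div_iff₀ hd]; nlinarith
    simp only [cutF]
    rw [max_eq_left (a := (‖x‖ ^ 2 - r ^ 2) / (R ^ 2 - r ^ 2)) (by linarith), max_eq_right (by nlinarith)]
    simp
  refine ⟨fun x => cutF ((‖x‖ ^ 2 - r ^ 2) / (R ^ 2 - r ^ 2)), ?_, ?_, hs, ?_, ?_, ?_, ?_⟩
  · exact cutF_contDiff.comp (((contDiff_norm_sq ℝ).sub contDiff_const).div_const _)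
  · exact HasCompactSupport.of_support_subset_isCompact (isCompact_closedBall 0 R)
      (subset_closure.trans hs)
  · intro x; unfold cutF; positivity
  · intro x
    unfold cutF
    refine pow_le_one₀ (by positivity) (max_le ?_ zero_le_one)
    have : 0 ≤ (max ((‖x‖ ^ 2 - r ^ 2) / (R ^ 2 - r ^ 2)) 0) ^ 2 := by positivity
    linarith
  · intro x hx
    rw [mem_closedBall_zero_iff] at hx
    have : (‖x‖ ^ 2 - r ^ 2) / (R ^ 2 - r ^ 2) ≤ 0 := by
      apply div_nonpos_of_nonpos_of_nonneg _ hd.le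
      have := norm_nonneg x
      nlinarith
    simp [cutF, max_eq_right this]
  · intro x
    set s := (‖x‖ ^ 2 - r ^ 2) / (R ^ 2 - r ^ 2) with hs'
    have hq : HasFDerivAt (fun x : E N => (‖x‖ ^ 2 - r ^ 2) / (R ^ 2 - r ^ 2))
        ((R ^ 2 - r ^ 2)⁻¹ • (2 • innerSL ℝ x)) x := by
      have := ((hasStrictFDerivAt_norm_sq x).hasFDerivAt.sub_const (r ^ 2)).mul_const (R ^ 2 - r ^ 2)⁻¹
      exact this
    have h3 := (cutF_hasDerivAt s).comp_hasFDerivAt x hq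
    have h4 : fderiv ℝ (fun x : E N => cutF ((‖x‖ ^ 2 - r ^ 2) / (R ^ 2 - r ^ 2))) x = _ := h3.fderiv
    rw [norm_gradient, h4, norm_smul, norm_smul, ← Nat.cast_smul_eq_nsmul ℝ, norm_smul, innerSL_apply_norm]
    rw [norm_neg, norm_inv, Real.norm_of_nonneg hd.le, Real.norm_of_nonneg (by positivity)]
    by_cases h1 : s ≤ 1
    · have hx : ‖x‖ ≤ 2 := by
        rw [hs', div_le_one hd] at h1
        have := norm_nonneg x
        nlinarith
      have a1 : max (1 - (max s 0) ^ 2) 0 ≤ 1 := max_le (by nlinarith [sq_nonneg (max s 0)]) zero_le_one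
      have a2 : max s 0 ≤ 1 := max_le h1 zero_le_one
      have a3 : (0:ℝ) ≤ max s 0 := le_max_right _ _
      calc _ ≤ 4 * 1 * 1 * ((R ^ 2 - r ^ 2)⁻¹ * (‖((2:ℕ):ℝ)‖ * 2)) := by gcongr
        _ = _ := by norm_num; ring
    · push Not at h1
      rw [max_eq_left (a := s) (by linarith), max_eq_right (by nlinarith)]
      simp; positivity

end SES

namespace SES
open Set Filter Topology
variable {N : ℕ}

lemma contOn_cb {f : E N → ℝ} (hf : Continuous f) (R : ℝ) : IntegrableOn f (closedBall 0 R) :=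
  hf.continuousOn.integrableOn_compact (isCompact_closedBall 0 R)

lemma int_le_set {f h : E N → ℝ} {R : ℝ} (hf : Continuous f) (hh : Continuous h)
    (h0 : ∀ x ∉ closedBall (0 : E N) R, f x = 0) (hle : ∀ x ∈ closedBall (0 : E N) R, f x ≤ h x) :
    ∫ x, f x ≤ ∫ x in closedBall (0 : E N) R, h x := by
  rw [← setIntegral_eq_integral_of_forall_compl_eq_zero h0]
  exact setIntegral_mono_on (contOn_cb hf R) (contOn_cb hh R) measurableSet_closedBall hle

/-- truncation -/
noncomputable def zz (w : E N → ℝ) (ℓ : ℝ) (x : E N) : ℝ := max (w x - ℓ) 0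

lemma zz_nonneg (w : E N → ℝ) (ℓ : ℝ) (x : E N) : 0 ≤ zz w ℓ x := le_max_right _ _

lemma zz_cont {w : E N → ℝ} (hw : Continuous w) (ℓ : ℝ) : Continuous (zz w ℓ) := by
  unfold zz; fun_prop

lemma zz_pow_contDiff {w : E N → ℝ} (hw : ContDiff ℝ 1 w) (ℓ : ℝ) (n : ℕ) (hn : 1 ≤ n) :
    ContDiff ℝ 1 (fun x => zz w ℓ x ^ (n + 1)) :=
  (contDiff_pos_pow n hn).comp (hw.sub contDiff_const)

lemma zz_pow_grad {w η : E N → ℝ} (hw : ContDiff ℝ 1 w) (hη : ContDiff ℝ 1 η) (ℓ : ℝ) (n : ℕ) (hn : 1 ≤ n)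
    (x : E N) : gradient (fun y => zz w ℓ y ^ (n + 1) * η y ^ 2) x =
      ((n + 1) * zz w ℓ x ^ n * η x ^ 2) • gradient w x +
        (zz w ℓ x ^ (n + 1) * (2 * η x)) • gradient η x := by
  have hF : HasDerivAt (fun t => (max (t - ℓ) 0) ^ (n + 1)) ((n + 1) * (max (w x - ℓ) 0) ^ n) (w x) := by
    have := (hasDerivAt_pos_pow n hn (w x - ℓ)).comp (w x) ((hasDerivAt_id (w x)).sub_const ℓ)
    simp only [mul_one] at this
    exact this
  have h2 : HasDerivAt (fun t : ℝ => t ^ 2) (2 * η x) (η x) := by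
    simpa using hasDerivAt_pow 2 (η x)
  have hη2 : DifferentiableAt ℝ (fun y => η y ^ 2) x :=
    (hη.differentiable one_ne_zero x).pow 2
  have h3 := grad_comp_mul (hw.differentiable one_ne_zero x) hF hη2
  have h4 := grad_comp (hη.differentiable one_ne_zero x) h2
  rw [h4, smul_smul] at h3
  exact h3

def Energy (A k : ℝ) (w : E N → ℝ) : Prop :=
  ∀ ℓ ≥ k, ∀ η : E N → ℝ, ContDiff ℝ 1 η → HasCompactSupport η → tsupport η ⊆ closedBall 0 2 →
    (∀ x, 0 ≤ η x) → (∀ x, η x ≤ 1) →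
    ∫ x, zz w ℓ x ^ 2 * ‖gradient w x‖ ^ 2 * η x ^ 2 ≤
      A * ((∫ x, zz w ℓ x ^ 4 * ‖gradient η x‖ ^ 2) + ∫ x, zz w ℓ x ^ 3 * η x ^ 2)

lemma dg_energy {A ℓ G R : ℝ} {w η : E N → ℝ} (hA : 0 ≤ A) (hw : ContDiff ℝ 1 w)
    (hη : ContDiff ℝ 1 η) (hc : HasCompactSupport η) (hs : tsupport η ⊆ closedBall 0 R)
    (h0 : ∀ x, 0 ≤ η x) (h1 : ∀ x, η x ≤ 1) (hG : ∀ x, ‖gradient η x‖ ≤ G)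
    (hE : ∫ x, zz w ℓ x ^ 2 * ‖gradient w x‖ ^ 2 * η x ^ 2 ≤
      A * ((∫ x, zz w ℓ x ^ 4 * ‖gradient η x‖ ^ 2) + ∫ x, zz w ℓ x ^ 3 * η x ^ 2)) :
    ∫ x, ‖gradient (fun y => zz w ℓ y ^ 4 * η y ^ 2) x‖ ≤
      (2 * A + 3) * (G ^ 2 + 1) * ∫ x in closedBall (0 : E N) R, (zz w ℓ x ^ 4 + zz w ℓ x ^ 3) := by
  set I := ∫ x in closedBall (0 : E N) R, (zz w ℓ x ^ 4 + zz w ℓ x ^ 3) with hI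
  have cw := hw.continuous
  have cz := zz_cont cw ℓ
  have cg := continuous_gradient hw
  have cη := hη.continuous
  have cgη := continuous_gradient hη
  have hz := zz_nonneg w ℓ
  have I0 : 0 ≤ I := integral_nonneg fun x => by have := hz x; simp only [Pi.zero_apply]; positivity
  have e0 : ∀ x ∉ tsupport η, η x = 0 := fun x hx => image_eq_zero_of_notMem_tsupport hx
  have eg0 : ∀ x ∉ tsupport η, gradient η x = 0 := fun x hx => gradient_eq_zero_of_notMem hx
  have i1 : ∫ x, zz w ℓ x ^ 4 * ‖gradient η x‖ ^ 2 ≤ G ^ 2 * I := by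
    rw [hI, ← integral_const_mul]
    refine int_le_set (by fun_prop) (by fun_prop) (fun x hx => by simp [eg0 x fun h => hx (hs h)]) fun x _ => ?_
    have := hz x
    have := hG x
    calc zz w ℓ x ^ 4 * ‖gradient η x‖ ^ 2 ≤ zz w ℓ x ^ 4 * G ^ 2 := by gcongr
      _ ≤ _ := by nlinarith [mul_nonneg (sq_nonneg G) (pow_nonneg (hz x) 3)]
  have sq1 : ∀ x, η x ^ 2 ≤ 1 := fun x => pow_le_one₀ (h0 x) (h1 x)
  have i2 : ∫ x, zz w ℓ x ^ 3 * η x ^ 2 ≤ I := by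
    refine int_le_set (by fun_prop) (by fun_prop) (fun x hx => by simp [e0 x fun h => hx (hs h)]) fun x _ => ?_
    have := hz x
    have := sq1 x
    calc zz w ℓ x ^ 3 * η x ^ 2 ≤ zz w ℓ x ^ 3 * 1 := by gcongr
      _ ≤ _ := by nlinarith [pow_nonneg (hz x) 4]
  have i3 : ∫ x, zz w ℓ x ^ 4 * η x ^ 2 ≤ I := by
    refine int_le_set (by fun_prop) (by fun_prop) (fun x hx => by simp [e0 x fun h => hx (hs h)]) fun x _ => ?_
    have := hz x
    have := sq1 x
    calc zz w ℓ x ^ 4 * η x ^ 2 ≤ zz w ℓ x ^ 4 * 1 := by gcongr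
      _ ≤ _ := by nlinarith [pow_nonneg (hz x) 3]
  have n1 : Integrable fun x => zz w ℓ x ^ 2 * ‖gradient w x‖ ^ 2 * η x ^ 2 :=
    integrable_of (by fun_prop) hc fun x hx => by simp [e0 x hx]
  have n2 : Integrable fun x => zz w ℓ x ^ 4 * η x ^ 2 :=
    integrable_of (by fun_prop) hc fun x hx => by simp [e0 x hx]
  have n3 : Integrable fun x => zz w ℓ x ^ 4 * ‖gradient η x‖ ^ 2 :=
    integrable_of (by fun_prop) hc fun x hx => by simp [eg0 x hx]
  have hpt : ∀ x, ‖gradient (fun y => zz w ℓ y ^ 4 * η y ^ 2) x‖ ≤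
      2 * (zz w ℓ x ^ 2 * ‖gradient w x‖ ^ 2 * η x ^ 2) + 3 * (zz w ℓ x ^ 4 * η x ^ 2) +
        1 * (zz w ℓ x ^ 4 * ‖gradient η x‖ ^ 2) := by
    intro x
    rw [zz_pow_grad hw hη ℓ 3 (by norm_num)]
    have hzx := hz x
    have h0x := h0 x
    refine (norm_add_le _ _).trans ?_
    rw [norm_smul, norm_smul, Real.norm_of_nonneg (by positivity), Real.norm_of_nonneg (by positivity)]
    generalize ‖gradient w x‖ = a
    generalize ‖gradient η x‖ = b
    generalize zz w ℓ x = z at *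
    generalize η x = t at *
    push_cast
    nlinarith [mul_nonneg (mul_nonneg (sq_nonneg z) (sq_nonneg t)) (sq_nonneg (a - z)),
      mul_nonneg (pow_nonneg hzx 4) (sq_nonneg (t - b))]
  have hfin : ∫ x, ‖gradient (fun y => zz w ℓ y ^ 4 * η y ^ 2) x‖ ≤
      2 * (∫ x, zz w ℓ x ^ 2 * ‖gradient w x‖ ^ 2 * η x ^ 2) + 3 * (∫ x, zz w ℓ x ^ 4 * η x ^ 2) +
        1 * (∫ x, zz w ℓ x ^ 4 * ‖gradient η x‖ ^ 2) := by
    have m1 : Integrable fun x => 2 * (zz w ℓ x ^ 2 * ‖gradient w x‖ ^ 2 * η x ^ 2) +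
        3 * (zz w ℓ x ^ 4 * η x ^ 2) := (n1.const_mul _).add (n2.const_mul _)
    rw [← integral_const_mul, ← integral_const_mul, ← integral_const_mul,
      ← integral_add (n1.const_mul _) (n2.const_mul _), ← integral_add m1 (n3.const_mul _)]
    exact integral_mono_of_nonneg (Eventually.of_forall fun x => norm_nonneg _)
      (m1.add (n3.const_mul _)) (Eventually.of_forall hpt)
  have : A * ((∫ x, zz w ℓ x ^ 4 * ‖gradient η x‖ ^ 2) + ∫ x, zz w ℓ x ^ 3 * η x ^ 2) ≤ A * (G ^ 2 * I + I) := by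
    gcongr
  nlinarith [mul_nonneg (sq_nonneg G) I0]

end SES

namespace SES
open Set Filter Topology
variable {N : ℕ}

lemma dg_level {χ σ ℓ ℓ' r : ℝ} {w η : E N → ℝ} (hχ : 1 < χ) (hσ : 0 < σ) (hℓ : ℓ' = ℓ + σ)
    (hw : Continuous w) (hη : Continuous η) (hc : HasCompactSupport η) (h0 : ∀ x, 0 ≤ η x)
    (h1 : ∀ x ∈ closedBall (0 : E N) r, η x = 1) :
    ∫ x in closedBall (0 : E N) r, (zz w ℓ' x ^ 4 + zz w ℓ' x ^ 3) ≤
      (1 + 1 / σ) * (σ ^ 4) ^ (1 - χ) * ∫ x, (zz w ℓ x ^ 4 * η x ^ 2) ^ χ := by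
  have cz := zz_cont hw ℓ
  have cz' := zz_cont hw ℓ'
  have hcont : Continuous fun x => (zz w ℓ x ^ 4 * η x ^ 2) ^ χ :=
    Continuous.rpow_const (by fun_prop) fun x => Or.inr (by linarith)
  have hIntg : Integrable fun x => (zz w ℓ x ^ 4 * η x ^ 2) ^ χ :=
    integrable_of hcont hc fun x hx => by
      rw [image_eq_zero_of_notMem_tsupport hx]; simp [Real.zero_rpow (by linarith : χ ≠ 0)]
  have hnn : ∀ x, 0 ≤ (zz w ℓ x ^ 4 * η x ^ 2) ^ χ := fun x => by
    have := zz_nonneg w ℓ x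
    positivity
  have s1 : ∫ x in closedBall (0 : E N) r, (zz w ℓ x ^ 4 * η x ^ 2) ^ χ ≤
      ∫ x, (zz w ℓ x ^ 4 * η x ^ 2) ^ χ :=
    setIntegral_le_integral hIntg (Eventually.of_forall hnn)
  refine le_trans ?_ (mul_le_mul_of_nonneg_left s1 (by positivity))
  rw [← integral_const_mul]
  refine setIntegral_mono_on (contOn_cb (by fun_prop) r) (contOn_cb (hcont.const_mul _) r)
    measurableSet_closedBall fun x hx => ?_
  rw [h1 x hx, one_pow, mul_one]
  have hz := zz_nonneg w ℓ x
  rcases le_or_gt (w x - ℓ') 0 with h | h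
  · have : zz w ℓ' x = 0 := max_eq_right h
    rw [this]; simp; positivity
  · have e' : zz w ℓ' x = w x - ℓ' := max_eq_left h.le
    have e : zz w ℓ x = w x - ℓ := max_eq_left (by linarith)
    have hle : zz w ℓ' x ≤ zz w ℓ x := by rw [e, e']; linarith
    have hσz : σ ≤ zz w ℓ x := by rw [e]; linarith
    have hz' := zz_nonneg w ℓ' x
    set z := zz w ℓ x
    have hzp : 0 < z := by linarith
    calc zz w ℓ' x ^ 4 + zz w ℓ' x ^ 3 ≤ z ^ 4 + z ^ 3 := by gcongr
      _ ≤ (1 + 1 / σ) * z ^ 4 := by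
        have : z ^ 3 * 1 ≤ z ^ 3 * (z / σ) := by
          gcongr; rwa [one_le_div hσ]
        have e2 : z ^ 3 * (z / σ) = 1 / σ * z ^ 4 := by ring
        nlinarith
      _ = (1 + 1 / σ) * ((z ^ 4) ^ (1 - χ) * (z ^ 4) ^ χ) := by
        rw [← Real.rpow_add (by positivity)]; simp
      _ ≤ (1 + 1 / σ) * ((σ ^ 4) ^ (1 - χ) * (z ^ 4) ^ χ) := by
        have : (z ^ 4) ^ (1 - χ) ≤ (σ ^ 4) ^ (1 - χ) :=
          Real.rpow_le_rpow_of_nonpos (by positivity) (by gcongr) (by linarith)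
        gcongr
      _ = _ := by ring

lemma deGiorgi (hN : 1 ≤ N) {k A : ℝ} (hk : 0 < k) (hA : 0 ≤ A) : ∃ ε0 : ℝ, 0 < ε0 ∧
    ∀ w : E N → ℝ, ContDiff ℝ 1 w → Energy A k w →
      ∫ x in closedBall (0 : E N) 2, (zz w k x ^ 4 + zz w k x ^ 3) ≤ ε0 → w 0 ≤ 2 * k := by
  obtain ⟨χ, hχ, CS, hCS, HS⟩ := sobolev hN
  set D := (1 + 2 / k) * ((k / 2) ^ 4) ^ (1 - χ) * (CS + 1) * ((2 * A + 3) * 257) ^ χ with hD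
  have hDp : 0 < D := by positivity
  set b := 2 * (2 ^ 4 : ℝ) ^ (χ - 1) * (2 ^ 2 : ℝ) ^ χ with hb
  have hb1 : 1 < b := by
    have h1 : 1 ≤ (2 ^ 4 : ℝ) ^ (χ - 1) := Real.one_le_rpow (by norm_num) (by linarith)
    have h2 : 1 ≤ (2 ^ 2 : ℝ) ^ χ := Real.one_le_rpow (by norm_num) (by linarith)
    nlinarith
  obtain ⟨ε0, hε0, H⟩ := fast_conv hDp hb1 (by linarith : 0 < χ - 1)
  refine ⟨ε0, hε0, fun w hw hE hI => ?_⟩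
  let ℓ : ℕ → ℝ := fun j => 2 * k - k / 2 ^ j
  let r : ℕ → ℝ := fun j => 1 + 1 / 2 ^ j
  let Y : ℕ → ℝ := fun j => ∫ x in closedBall (0 : E N) (r j), (zz w (ℓ j) x ^ 4 + zz w (ℓ j) x ^ 3)
  have cw := hw.continuous
  have Y0 : ∀ j, 0 ≤ Y j := fun j => integral_nonneg fun x => by
    have := zz_nonneg w (ℓ j) x
    simp only [Pi.zero_apply]; positivity
  have hlim : Tendsto Y atTop (𝓝 0) := by
    refine H Y Y0 (fun j => ?_) ?_
    · set t : ℝ := 2 ^ j with ht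
      have ht1 : 1 ≤ t := one_le_pow₀ (by norm_num)
      have hr : r j = 1 + 1 / t := rfl
      have hr' : r (j + 1) = 1 + 1 / (2 * t) := by simp only [r, pow_succ']; rfl
      have h1t : 1 / t ≤ 1 := by rw [div_le_one (by linarith)]; exact ht1
      have h2t : 1 / (2 * t) = 1 / t / 2 := by field_simp
      have h3t : 0 < 1 / t := by positivity
      have hdiff : 1 / t ≤ r j ^ 2 - r (j + 1) ^ 2 := by
        rw [hr, hr', h2t]; nlinarith
      obtain ⟨η, g1, g2, g3, g4, g5, g6, g7⟩ := cut_exists (N := N) (r := r (j + 1)) (R := r j)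
        (by rw [hr']; positivity) (by rw [hr, hr', h2t]; linarith) (by rw [hr]; linarith)
      have hr2 : r j ≤ 2 := by rw [hr]; linarith
      have hG : ∀ x, ‖gradient η x‖ ≤ 16 * t := fun x => (g7 x).trans (by
        rw [div_le_iff₀ (by linarith)]
        calc (16:ℝ) = 16 * t * (1 / t) := by field_simp
          _ ≤ _ := by gcongr)
      have hℓk : k ≤ ℓ j := by
        have : k / t ≤ k := div_le_self hk.le ht1
        change k ≤ 2 * k - k / t
        linarith
      have hen := hE (ℓ j) hℓk η g1 g2 (g3.trans (closedBall_subset_closedBall hr2)) g4 g5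
      have s1 := dg_energy hA hw g1 g2 g3 g4 g5 hG hen
      have hσ : 0 < k / (2 * t) := by positivity
      have s2 := dg_level (r := r (j + 1)) (ℓ := ℓ j) (ℓ' := ℓ (j + 1)) hχ hσ (by
        change 2 * k - k / 2 ^ (j + 1) = 2 * k - k / t + k / (2 * t)
        rw [pow_succ', ← ht]; field_simp; ring) cw g1.continuous g2 g4 g6
      have gs : tsupport (fun y => zz w (ℓ j) y ^ 4 * η y ^ 2) ⊆ tsupport η := by
        refine closure_mono fun x hx => ?_
        intro h
        apply hx
        simp [h]
      have s3 := HS (fun y => zz w (ℓ j) y ^ 4 * η y ^ 2)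
        ((zz_pow_contDiff hw (ℓ j) 3 (by norm_num)).mul (g1.pow 2))
        (hcs_of g2 fun x hx => by simp [image_eq_zero_of_notMem_tsupport hx])
        (fun x => by have := zz_nonneg w (ℓ j) x; positivity)
        (gs.trans (g3.trans (closedBall_subset_closedBall (by linarith))))
      have hYj := Y0 j
      calc Y (j + 1) ≤ (1 + 1 / (k / (2 * t))) * ((k / (2 * t)) ^ 4) ^ (1 - χ) *
            ∫ x, (zz w (ℓ j) x ^ 4 * η x ^ 2) ^ χ := s2
        _ ≤ (1 + 1 / (k / (2 * t))) * ((k / (2 * t)) ^ 4) ^ (1 - χ) *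
            (CS * ((2 * A + 3) * ((16 * t) ^ 2 + 1) * Y j) ^ χ) := by
            gcongr
            refine s3.trans ?_
            gcongr
        _ ≤ ((1 + 2 / k) * t) * (((k / 2) ^ 4) ^ (1 - χ) * (t ^ 4) ^ (χ - 1)) *
            ((CS + 1) * (((2 * A + 3) * 257) ^ χ * (t ^ 2) ^ χ * (Y j) ^ χ)) := by
            have a1 : 1 + 1 / (k / (2 * t)) ≤ (1 + 2 / k) * t := by
              have : 1 + 1 / (k / (2 * t)) = 1 + 2 / k * t := by field_simp
              rw [this]; nlinarith
            have a2 : ((k / (2 * t)) ^ 4) ^ (1 - χ) = ((k / 2) ^ 4) ^ (1 - χ) * (t ^ 4) ^ (χ - 1) := by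
              have : (k / (2 * t)) ^ 4 = (k / 2) ^ 4 * (t ^ 4)⁻¹ := by field_simp
              rw [this, Real.mul_rpow (by positivity) (by positivity), Real.inv_rpow (by positivity),
                ← Real.rpow_neg (by positivity), neg_sub]
            have a3 : ((2 * A + 3) * ((16 * t) ^ 2 + 1) * Y j) ^ χ ≤
                ((2 * A + 3) * 257) ^ χ * (t ^ 2) ^ χ * (Y j) ^ χ := by
              rw [← Real.mul_rpow (by positivity) (by positivity),
                ← Real.mul_rpow (by positivity) (by positivity)]
              refine Real.rpow_le_rpow (by positivity) ?_ (by linarith)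
              have : (16 * t) ^ 2 + 1 ≤ 257 * t ^ 2 := by nlinarith
              calc _ ≤ (2 * A + 3) * (257 * t ^ 2) * Y j := by gcongr
                _ = _ := by ring
            rw [a2]
            gcongr
            linarith
        _ = D * b ^ j * (Y j) ^ (1 + (χ - 1)) := by
            have c1 : (t ^ 4) ^ (χ - 1) = ((2 ^ 4 : ℝ) ^ (χ - 1)) ^ j := by
              rw [Real.rpow_pow_comm (by norm_num), ht, ← pow_mul, ← pow_mul, mul_comm]
            have c2 : (t ^ 2) ^ χ = ((2 ^ 2 : ℝ) ^ χ) ^ j := by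
              rw [Real.rpow_pow_comm (by norm_num), ht, ← pow_mul, ← pow_mul, mul_comm]
            rw [c1, c2, hb, mul_pow, mul_pow, hD, ht]
            rw [show 1 + (χ - 1) = χ by ring]
            ring
    · have e1 : ℓ 0 = k := by simp [ℓ]; ring
      have e2 : r 0 = 2 := by simp [r]; norm_num
      simp only [Y, e1, e2]
      exact hI
  by_contra hcon
  push Not at hcon
  set c := (w 0 - 2 * k) / 2 with hc
  have hcp : 0 < c := by rw [hc]; linarith
  have hnb : ∀ᶠ x in 𝓝 (0 : E N), 2 * k + c < w x :=
    cw.continuousAt.eventually (lt_mem_nhds (by linarith))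
  obtain ⟨ρ, hρ, hb'⟩ := Metric.eventually_nhds_iff_ball.1 hnb
  set s := min ρ 1
  have hs : 0 < s := lt_min hρ one_pos
  have hV : 0 < volume.real (ball (0 : E N) s) :=
    ENNReal.toReal_pos (measure_ball_pos _ _ hs).ne' measure_ball_lt_top.ne
  have hlow : ∀ j, c ^ 3 * volume.real (ball (0 : E N) s) ≤ Y j := by
    intro j
    have cz := zz_cont cw (ℓ j)
    have hsub : ball (0 : E N) s ⊆ closedBall 0 (r j) :=
      ball_subset_closedBall.trans (closedBall_subset_closedBall
        ((min_le_right _ _).trans (by simp [r])))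
    have hi := contOn_cb (f := fun x => zz w (ℓ j) x ^ 4 + zz w (ℓ j) x ^ 3) (by fun_prop) (r j)
    have h1 : ∫ x in ball (0 : E N) s, (zz w (ℓ j) x ^ 4 + zz w (ℓ j) x ^ 3) ≤ Y j :=
      setIntegral_mono_set hi (Eventually.of_forall fun x => by
        have := zz_nonneg w (ℓ j) x
        simp only [Pi.zero_apply]; positivity) hsub.eventuallyLE
    refine le_trans ?_ h1
    have h2 : ∫ x in ball (0 : E N) s, c ^ 3 ≤
        ∫ x in ball (0 : E N) s, (zz w (ℓ j) x ^ 4 + zz w (ℓ j) x ^ 3) := by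
      refine setIntegral_mono_on (integrableOn_const (measure_ball_lt_top).ne) (hi.mono_set hsub)
        measurableSet_ball fun x hx => ?_
      have hx1 := hb' x (ball_subset_ball (min_le_left _ _) hx)
      have hzc : c ≤ zz w (ℓ j) x := by
        refine le_max_of_le_left ?_
        have : 0 < k / 2 ^ j := by positivity
        change c ≤ w x - (2 * k - k / 2 ^ j)
        linarith
      have : c ^ 3 ≤ zz w (ℓ j) x ^ 3 := by gcongr
      have : 0 ≤ zz w (ℓ j) x ^ 4 := by have := zz_nonneg w (ℓ j) x; positivity
      linarith
    refine le_trans (le_of_eq ?_) h2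
    rw [setIntegral_const, smul_eq_mul, mul_comm]
  have := ge_of_tendsto' hlim hlow
  have : 0 < c ^ 3 * volume.real (ball (0 : E N) s) := by positivity
  linarith

end SES

namespace SES
open Set Filter Topology
variable {N : ℕ}

lemma sp_lip {s M a b : ℝ} (hs : 0 ≤ s) (ha : |a| ≤ M) (hb : |b| ≤ M) :
    |sp s a - sp s b| ≤ (s + 1) * M ^ s * |a - b| := by
  have h := (convex_Icc (-M) M).norm_image_sub_le_of_norm_hasDerivWithin_le (f := sp s)
    (f' := fun t => (s + 1) * |t| ^ s) (C := (s + 1) * M ^ s)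
    (fun t _ => (hasDerivAt_sp hs t).hasDerivWithinAt) (fun t ht => ?_)
    (x := b) (y := a) (abs_le.1 hb) (abs_le.1 ha)
  · simpa [Real.norm_eq_abs] using h
  · rw [Real.norm_of_nonneg (by positivity)]
    have : |t| ≤ M := abs_le.2 ht
    gcongr

lemma vec_mono {r : ℝ} (hr : 0 ≤ r) (P Q : E N) :
    1 / 2 * ‖Q‖ ^ r * ‖P - Q‖ ^ 2 ≤ ⟪‖P‖ ^ r • P - ‖Q‖ ^ r • Q, P - Q⟫ := by
  have e1 : ⟪‖P‖ ^ r • P - ‖Q‖ ^ r • Q, P - Q⟫ =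
      1 / 2 * (‖P‖ ^ r + ‖Q‖ ^ r) * ‖P - Q‖ ^ 2 +
        1 / 2 * (‖P‖ ^ r - ‖Q‖ ^ r) * (‖P‖ ^ 2 - ‖Q‖ ^ 2) := by
    rw [norm_sub_sq_real]
    simp only [inner_sub_left, inner_sub_right, real_inner_smul_left, real_inner_self_eq_norm_sq]
    rw [real_inner_comm P Q]
    ring
  have e2 : 0 ≤ (‖P‖ ^ r - ‖Q‖ ^ r) * (‖P‖ ^ 2 - ‖Q‖ ^ 2) := by
    rcases le_total ‖P‖ ‖Q‖ with h | h
    · have h1 : ‖P‖ ^ r ≤ ‖Q‖ ^ r := Real.rpow_le_rpow (norm_nonneg _) h hr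
      have h2 : ‖P‖ ^ 2 ≤ ‖Q‖ ^ 2 := by gcongr
      exact mul_nonneg_of_nonpos_of_nonpos (by linarith) (by linarith)
    · have h1 : ‖Q‖ ^ r ≤ ‖P‖ ^ r := Real.rpow_le_rpow (norm_nonneg _) h hr
      have h2 : ‖Q‖ ^ 2 ≤ ‖P‖ ^ 2 := by gcongr
      exact mul_nonneg (by linarith) (by linarith)
  rw [e1]
  have : 0 ≤ ‖P‖ ^ r * ‖P - Q‖ ^ 2 := by positivity
  nlinarith

lemma vec_lip {r K : ℝ} (hr : 0 ≤ r) {P Q : E N} (hP : ‖P‖ ≤ K) (hQ : ‖Q‖ ≤ K) :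
    ‖‖P‖ ^ r • P - ‖Q‖ ^ r • Q‖ ≤ (r + 2) * K ^ r * ‖P - Q‖ := by
  have e : ‖P‖ ^ r • P - ‖Q‖ ^ r • Q = ‖P‖ ^ r • (P - Q) + (‖P‖ ^ r - ‖Q‖ ^ r) • Q := by
    rw [smul_sub, sub_smul]; abel
  have h0 : |‖P‖ ^ r - ‖Q‖ ^ r| * ‖Q‖ ≤ |sp r ‖P‖ - sp r ‖Q‖| := by
    simp only [sp, abs_norm]
    have hr1 : ∀ {a b : ℝ}, 0 ≤ a → a ≤ b → a ^ r ≤ b ^ r := fun ha hab => Real.rpow_le_rpow ha hab hr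
    have p1 := norm_nonneg P
    have p2 := norm_nonneg Q
    rcases le_total ‖P‖ ‖Q‖ with h | h
    · have h1 := hr1 p1 h
      have h2 : 0 ≤ ‖P‖ ^ r := by positivity
      rw [abs_of_nonpos (by linarith)]
      refine le_trans ?_ (neg_le_abs _)
      nlinarith
    · have h1 := hr1 p2 h
      have h2 : 0 ≤ ‖P‖ ^ r := by positivity
      rw [abs_of_nonneg (by linarith)]
      refine le_trans ?_ (le_abs_self _)
      nlinarith
  have h1 : |sp r ‖P‖ - sp r ‖Q‖| ≤ (r + 1) * K ^ r * |‖P‖ - ‖Q‖| :=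
    sp_lip hr (by rwa [abs_norm]) (by rwa [abs_norm])
  have h2 : |‖P‖ - ‖Q‖| ≤ ‖P - Q‖ := abs_norm_sub_norm_le P Q
  have hK : 0 ≤ K := (norm_nonneg P).trans hP
  have h3 : ‖P‖ ^ r ≤ K ^ r := Real.rpow_le_rpow (norm_nonneg _) hP hr
  rw [e]
  refine (norm_add_le _ _).trans ?_
  rw [norm_smul, norm_smul, Real.norm_of_nonneg (by positivity : 0 ≤ ‖P‖ ^ r), Real.norm_eq_abs]
  calc _ ≤ K ^ r * ‖P - Q‖ + (r + 1) * K ^ r * ‖P - Q‖ := by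
        refine add_le_add (by gcongr) (h0.trans (h1.trans ?_))
        gcongr
    _ = _ := by ring

lemma exists_cutoff23 : ∃ η : E N → ℝ, ContDiff ℝ 1 η ∧ HasCompactSupport η ∧
    tsupport η ⊆ closedBall 0 3 ∧ (∀ x, 0 ≤ η x) ∧ (∀ x, η x ≤ 1) ∧
    (∀ x ∈ closedBall (0 : E N) 2, η x = 1) ∧ ∃ G : ℝ, ∀ x, ‖gradient η x‖ ≤ G := by
  have key : ∃ η : E N → ℝ, ContDiff ℝ 1 η ∧ HasCompactSupport η ∧
    tsupport η ⊆ closedBall 0 3 ∧ (∀ x, 0 ≤ η x) ∧ (∀ x, η x ≤ 1) ∧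
    (∀ x ∈ closedBall (0 : E N) 2, η x = 1) := by
    let b : ContDiffBump (0 : E N) := ⟨2, 3, by norm_num, by norm_num⟩
    exact ⟨b, b.contDiff, b.hasCompactSupport, b.tsupport_eq.subset, fun x => b.nonneg,
      fun x => b.le_one, fun x hx => b.one_of_mem_closedBall hx⟩
  obtain ⟨η, h1, h2, h3, h4, h5, h6⟩ := key
  refine ⟨η, h1, h2, h3, h4, h5, h6, ?_⟩
  obtain ⟨G, hG⟩ := (HasCompactSupport.intro (f := gradient η) h2 fun x hx => gradient_eq_zero_of_notMem hx).exists_bound_of_continuous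
    (continuous_gradient h1)
  exact ⟨G, hG⟩

lemma caccioppoli {p lam K : ℝ} (hp : 2 < p) (hlam : p - 1 < lam) (hK : 0 ≤ K) :
    ∃ C : ℝ, 0 < C ∧ ∀ δ : ℝ, 0 < δ → δ ≤ 1 → ∀ v : E N → ℝ, ContDiff ℝ 1 v →
      Weak p lam (ball 0 4) v → (∀ x ∈ ball (0 : E N) 4, |v x| ≤ δ) →
      (∀ x ∈ ball (0 : E N) 4, ‖gradient v x‖ ≤ K) →
      ∫ x in closedBall (0 : E N) 2, ‖gradient v x‖ ^ p ≤ C * δ := by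
  obtain ⟨b, hb, hbc, hbs, hbn, hbl, hb2, G, hG⟩ := exists_cutoff23 (N := N)
  have hG0 : 0 ≤ G := (norm_nonneg _).trans (hG 0)
  set V := volume.real (closedBall (0 : E N) 3) with hV
  have hV0 : 0 ≤ V := by positivity
  refine ⟨(1 + 2 * K ^ (p - 1) * G) * V + 1, by positivity, fun δ hδ hδ1 v hv hW h1 h2 => ?_⟩
  have cv := hv.continuous
  have cg := continuous_gradient hv
  have cb := hb.continuous
  have cgb := continuous_gradient hb
  have csp : Continuous (sp (lam - 1)) := (contDiff_sp (by linarith)).continuous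
  have crp : ∀ s : ℝ, 0 ≤ s → Continuous fun x => ‖gradient v x‖ ^ s :=
    fun s hs => cg.norm.rpow_const fun x => Or.inr hs
  have cr2 := crp (p - 2) (by linarith)
  have crpp := crp p (by linarith)
  have e0 : ∀ x ∉ tsupport b, b x = 0 := fun x hx => image_eq_zero_of_notMem_tsupport hx
  have eg0 : ∀ x ∉ tsupport b, gradient b x = 0 := fun x hx => gradient_eq_zero_of_notMem hx
  have hφ : ContDiff ℝ 1 (fun x => v x * b x ^ 2) := hv.mul (hb.pow 2)
  have hgr : ∀ x, gradient (fun x => v x * b x ^ 2) x =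
      (b x ^ 2) • gradient v x + (v x * (2 * b x)) • gradient b x := by
    intro x
    have h2 : HasDerivAt (fun t : ℝ => t ^ 2) (2 * b x) (b x) := by
      simpa using hasDerivAt_pow 2 (b x)
    have h3 := grad_comp_mul (hv.differentiable one_ne_zero x) (hasDerivAt_id (v x))
      (η := fun x => b x ^ 2) ((hb.differentiable one_ne_zero x).pow 2)
    have h4 := grad_comp (hb.differentiable one_ne_zero x) h2
    rw [h4, smul_smul, one_mul] at h3
    exact h3
  have hw := hW _ hφ (hcs_of hbc fun x hx => by simp [e0 x hx])
    ((tsupport_sub fun x hx => by simp [e0 x hx]).trans (hbs.trans (closedBall_subset_ball (by norm_num))))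
  have hpt : ∀ x, ‖gradient v x‖ ^ (p - 2) * ⟪gradient v x, gradient (fun x => v x * b x ^ 2) x⟫ =
      ‖gradient v x‖ ^ p * b x ^ 2 +
      ‖gradient v x‖ ^ (p - 2) * (v x * (2 * b x) * ⟪gradient v x, gradient b x⟫) := by
    intro x
    rw [hgr, inner_add_right, real_inner_smul_right, real_inner_smul_right, real_inner_self_eq_norm_sq]
    have : ‖gradient v x‖ ^ p = ‖gradient v x‖ ^ (p - 2) * ‖gradient v x‖ ^ 2 := by
      rw [← Real.rpow_natCast, ← Real.rpow_add_of_nonneg (norm_nonneg _) (by linarith) (by norm_num)]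
      norm_num
    rw [this]; ring
  have i1 : Integrable fun x => ‖gradient v x‖ ^ p * b x ^ 2 :=
    integrable_of (by fun_prop) hbc fun x hx => by simp [e0 x hx]
  have i2 : Integrable fun x =>
      ‖gradient v x‖ ^ (p - 2) * (v x * (2 * b x) * ⟪gradient v x, gradient b x⟫) :=
    integrable_of (by fun_prop) hbc fun x hx => by simp [e0 x hx]
  have i3 : Integrable fun x => sp (lam - 1) (v x) * (v x * b x ^ 2) :=
    integrable_of (by fun_prop) hbc fun x hx => by simp [e0 x hx]
  simp_rw [hpt] at hw
  rw [integral_add i1 i2] at hw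
  have hle : ∫ x in closedBall (0 : E N) 2, ‖gradient v x‖ ^ p ≤ ∫ x, ‖gradient v x‖ ^ p * b x ^ 2 := by
    refine le_trans ?_ (setIntegral_le_integral i1 (s := closedBall 0 2)
      (Eventually.of_forall fun x => by simp only [Pi.zero_apply]; positivity))
    refine le_of_eq (setIntegral_congr_fun measurableSet_closedBall fun x hx => ?_)
    rw [hb2 x hx]; simp
  have hup : (∫ x, sp (lam - 1) (v x) * (v x * b x ^ 2)) - ∫ x,
      ‖gradient v x‖ ^ (p - 2) * (v x * (2 * b x) * ⟪gradient v x, gradient b x⟫) ≤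
      ∫ x in closedBall (0 : E N) 3, (1 + 2 * K ^ (p - 1) * G) * δ := by
    rw [← integral_sub i3 i2]
    refine int_le_set (by fun_prop) (by fun_prop) (fun x hx => by simp [e0 x fun h => hx (hbs h)]) fun x hx => ?_
    have hx4 : x ∈ ball (0 : E N) 4 := closedBall_subset_ball (by norm_num) hx
    have a1 := h1 x hx4
    have a2 := h2 x hx4
    have a3 := hG x
    have b0 : 0 ≤ b x := hbn x
    have b1 : b x ≤ 1 := hbl x
    have c1 : sp (lam - 1) (v x) * (v x * b x ^ 2) ≤ δ := by
      have : sp (lam - 1) (v x) * (v x * b x ^ 2) = |v x| ^ (lam - 1) * (|v x| * |v x|) * b x ^ 2 := by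
        rw [abs_mul_abs_self, sp]; ring
      rw [this]
      have d1 : |v x| ^ (lam - 1) ≤ 1 := Real.rpow_le_one (abs_nonneg _) (by linarith) (by linarith)
      calc _ ≤ 1 * (1 * δ) * 1 ^ 2 := by gcongr; linarith
        _ = δ := by ring
    have c2 : -(‖gradient v x‖ ^ (p - 2) * (v x * (2 * b x) * ⟪gradient v x, gradient b x⟫)) ≤
        2 * K ^ (p - 1) * G * δ := by
      refine (neg_le_abs _).trans ?_
      rw [abs_mul, abs_mul, abs_mul, abs_of_nonneg (by positivity : 0 ≤ ‖gradient v x‖ ^ (p - 2)),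
        abs_of_nonneg (by positivity : 0 ≤ 2 * b x)]
      have hin := abs_real_inner_le_norm (gradient v x) (gradient b x)
      have hk : K ^ (p - 1) = K ^ (p - 2) * K := by
        rw [← Real.rpow_add_one' hK (by linarith)]; congr 1; ring
      calc _ ≤ K ^ (p - 2) * (δ * (2 * 1) * (K * G)) := by
            gcongr
            exact hin.trans (by gcongr)
        _ = _ := by rw [hk]; ring
    linarith
  rw [setIntegral_const, smul_eq_mul, ← hV] at hup
  have hI1 : ∫ x, ‖gradient v x‖ ^ p * b x ^ 2 = (∫ x, sp (lam - 1) (v x) * (v x * b x ^ 2)) - ∫ x,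
      ‖gradient v x‖ ^ (p - 2) * (v x * (2 * b x) * ⟪gradient v x, gradient b x⟫) := by
    linarith
  rw [← hI1] at hup
  nlinarith

end SES

namespace SES
open Set Filter Topology
variable {N : ℕ}

lemma gradient_shift (f : E N → ℝ) (y x : E N) :
    gradient (fun z => f (z + y)) x = gradient f (x + y) := by
  unfold gradient
  rw [fderiv_comp_add_right]

lemma weak_shift {p lam : ℝ} {v φ : E N → ℝ} (hW : Weak p lam (ball 0 4) v) (hφ : ContDiff ℝ 1 φ)
    (hs : tsupport φ ⊆ closedBall 0 2) {y : E N} (hy : ‖y‖ ≤ 1) :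
    ∫ x, ‖gradient v (x + y)‖ ^ (p - 2) * ⟪gradient v (x + y), gradient φ x⟫ =
      ∫ x, sp (lam - 1) (v (x + y)) * φ x := by
  have hs' : tsupport (fun x => φ (x - y)) ⊆ closedBall 0 3 := by
    refine closure_minimal (fun x hx => ?_) isClosed_closedBall
    have : x - y ∈ closedBall (0 : E N) 2 := hs (subset_closure hx)
    rw [mem_closedBall_zero_iff] at this ⊢
    have := norm_add_le (x - y) y
    rw [sub_add_cancel] at this
    linarith
  have h := hW (fun x => φ (x - y)) (hφ.comp (contDiff_id.sub contDiff_const))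
    (HasCompactSupport.of_support_subset_isCompact (isCompact_closedBall 0 3) (subset_closure.trans hs'))
    (hs'.trans (closedBall_subset_ball (by norm_num)))
  have e : ∀ x, gradient (fun z => φ (z - y)) x = gradient φ (x - y) := by
    intro x
    have := gradient_shift φ (-y) x
    simpa only [← sub_eq_add_neg] using this
  simp_rw [e] at h
  rw [← integral_add_right_eq_self _ y, ← integral_add_right_eq_self
    (fun x => sp (lam - 1) (v x) * φ (x - y)) y] at h
  simpa only [add_sub_cancel_right] using h

lemma energy_pt {c0 C1 τ z t a b X S : ℝ} (hc0 : 0 < c0) (hz : 0 ≤ z) (ht : 0 ≤ t) (hab : 0 ≤ a)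
    (hX : 3 * z ^ 2 * t ^ 2 * (c0 * a ^ 2) - 2 * z ^ 3 * t * (C1 * a * b) ≤ X)
    (hS : S ≤ τ * (z ^ 3 * t ^ 2)) :
    2 * c0 * (z ^ 2 * a ^ 2 * t ^ 2) - C1 ^ 2 / c0 * (z ^ 4 * b ^ 2) - τ * (z ^ 3 * t ^ 2) ≤ X - S := by
  have h : 2 * z ^ 3 * t * (C1 * a * b) ≤ c0 * (z ^ 2 * a ^ 2 * t ^ 2) + C1 ^ 2 / c0 * (z ^ 4 * b ^ 2) := by
    have e : c0 * (z ^ 2 * a ^ 2 * t ^ 2) + C1 ^ 2 / c0 * (z ^ 4 * b ^ 2) - 2 * z ^ 3 * t * (C1 * a * b) =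
        z ^ 2 / c0 * (c0 * a * t - C1 * z * b) ^ 2 := by field_simp; ring
    have : 0 ≤ z ^ 2 / c0 * (c0 * a * t - C1 * z * b) ^ 2 := by positivity
    linarith
  nlinarith

lemma energy_of_weak {p lam K k : ℝ} (hp : 2 < p) (hlam : p - 1 < lam) (hK : 0 ≤ K) (hk : 0 < k) :
    ∃ A : ℝ, 0 ≤ A ∧ ∀ v : E N → ℝ, ContDiff ℝ 1 v → Weak p lam (ball 0 4) v →
      (∀ x ∈ ball (0 : E N) 4, |v x| ≤ 1) → (∀ x ∈ ball (0 : E N) 4, ‖gradient v x‖ ≤ K) →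
      ∀ (y : E N) (h : ℝ), 0 < h → ‖y‖ = h → h ≤ 1 →
      (∀ x ∈ closedBall (0 : E N) 2, h⁻¹ * (v (x + y) - v x) ≤ ‖gradient v x‖ + k / 2) →
      Energy A k (fun x => h⁻¹ * (v (x + y) - v x)) := by
  set c0 := 1 / 2 * (k / 2) ^ (p - 2) with hc0
  have hc0p : 0 < c0 := by positivity
  set C1 := (p - 2 + 2) * K ^ (p - 2) with hC1
  set τ := (lam - 1 + 1) * 1 ^ (lam - 1) * K with hτ
  have hτ0 : 0 ≤ τ := by
    have : 0 ≤ lam - 1 + 1 := by linarith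
    positivity
  refine ⟨(C1 ^ 2 / c0 + τ) / (2 * c0), by positivity, ?_⟩
  intro v hv hW h1 h2 y h hh hy hh1 hwle ℓ hℓ η hη hc hs g0 g1
  set w : E N → ℝ := fun x => h⁻¹ * (v (x + y) - v x) with hw
  have hvy : ContDiff ℝ 1 (fun x => v (x + y)) := hv.comp (contDiff_id.add contDiff_const)
  have hwc : ContDiff ℝ 1 w := contDiff_const.mul (hvy.sub hv)
  have hgw : ∀ x, gradient w x = h⁻¹ • (gradient v (x + y) - gradient v x) := by
    intro x
    rw [← gradient_shift]
    have hd1 := (hvy.differentiable one_ne_zero x)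
    have hd2 := (hv.differentiable one_ne_zero x)
    apply HasGradientAt.gradient
    rw [hasGradientAt_iff_hasFDerivAt]
    refine ((hd1.hasFDerivAt.sub hd2.hasFDerivAt).const_mul h⁻¹).congr_fderiv ?_
    ext z
    simp
  have cw := hwc.continuous
  have cz := zz_cont cw ℓ
  have cg := continuous_gradient hv
  have cgw := continuous_gradient hwc
  have cη := hη.continuous
  have cgη := continuous_gradient hη
  have hz := zz_nonneg w ℓ
  have e0 : ∀ x ∉ tsupport η, η x = 0 := fun x hx => image_eq_zero_of_notMem_tsupport hx
  have eg0 : ∀ x ∉ tsupport η, gradient η x = 0 := fun x hx => gradient_eq_zero_of_notMem hx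
  set φ : E N → ℝ := fun x => zz w ℓ x ^ 3 * η x ^ 2 with hφd
  have hφ : ContDiff ℝ 1 φ := (zz_pow_contDiff hwc ℓ 2 (by norm_num)).mul (hη.pow 2)
  have hφ0 : ∀ x ∉ tsupport η, φ x = 0 := fun x hx => by simp [hφd, e0 x hx]
  have hφs : tsupport φ ⊆ tsupport η := tsupport_sub hφ0
  have hφg : ∀ x, gradient φ x = (3 * zz w ℓ x ^ 2 * η x ^ 2) • gradient w x +
        (zz w ℓ x ^ 3 * (2 * η x)) • gradient η x := by
    intro x
    have := zz_pow_grad hwc hη ℓ 2 (by norm_num) x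
    norm_num at this
    exact this
  have hφg0 : ∀ x ∉ tsupport η, gradient φ x = 0 := fun x hx => by
    rw [hφg, e0 x hx, eg0 x hx]; simp
  have cφ := hφ.continuous
  have cgφ := continuous_gradient hφ
  have E1 := weak_shift hW hφ (hφs.trans hs) (y := y) (by rw [hy]; exact hh1)
  have E2 := hW φ hφ (hcs_of hc hφ0)
    ((hφs.trans hs).trans (closedBall_subset_ball (by norm_num)))
  have csp : Continuous (sp (lam - 1)) := (contDiff_sp (by linarith)).continuous
  have cr : Continuous fun x => ‖gradient v x‖ ^ (p - 2) :=
    cg.norm.rpow_const fun x => Or.inr (by linarith)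
  have cr' : Continuous fun x => ‖gradient v (x + y)‖ ^ (p - 2) := cr.comp (by fun_prop)
  have cgy : Continuous fun x => gradient v (x + y) := cg.comp (by fun_prop)
  have cv := hv.continuous
  have cvy := hvy.continuous
  have i1 : Integrable fun x => ‖gradient v (x + y)‖ ^ (p - 2) * ⟪gradient v (x + y), gradient φ x⟫ :=
    integrable_of (by fun_prop) hc fun x hx => by simp [hφg0 x hx]
  have i2 : Integrable fun x => ‖gradient v x‖ ^ (p - 2) * ⟪gradient v x, gradient φ x⟫ :=
    integrable_of (by fun_prop) hc fun x hx => by simp [hφg0 x hx]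
  have i3 : Integrable fun x => sp (lam - 1) (v (x + y)) * φ x :=
    integrable_of (by fun_prop) hc fun x hx => by simp [hφ0 x hx]
  have i4 : Integrable fun x => sp (lam - 1) (v x) * φ x :=
    integrable_of (by fun_prop) hc fun x hx => by simp [hφ0 x hx]
  have j1 : Integrable fun x => zz w ℓ x ^ 2 * ‖gradient w x‖ ^ 2 * η x ^ 2 :=
    integrable_of (by fun_prop) hc fun x hx => by simp [e0 x hx]
  have j2 : Integrable fun x => zz w ℓ x ^ 4 * ‖gradient η x‖ ^ 2 :=
    integrable_of (by fun_prop) hc fun x hx => by simp [eg0 x hx]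
  have j3 : Integrable fun x => zz w ℓ x ^ 3 * η x ^ 2 :=
    integrable_of (by fun_prop) hc fun x hx => by simp [e0 x hx]
  have hI := integral_lin4 i1 i2 i4 i3 h⁻¹ (-h⁻¹) h⁻¹ h⁻¹
  rw [E1, E2] at hI
  have hJ := integral_lin4 j1 j2 j3 j3 (2 * c0) (-(C1 ^ 2 / c0)) (-τ) 0
  have hle : ∫ x, (2 * c0 * (zz w ℓ x ^ 2 * ‖gradient w x‖ ^ 2 * η x ^ 2) +
      -(C1 ^ 2 / c0) * (zz w ℓ x ^ 4 * ‖gradient η x‖ ^ 2) + -τ * (zz w ℓ x ^ 3 * η x ^ 2) -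
        0 * (zz w ℓ x ^ 3 * η x ^ 2)) ≤
      ∫ x, (h⁻¹ * (‖gradient v (x + y)‖ ^ (p - 2) * ⟪gradient v (x + y), gradient φ x⟫) +
        -h⁻¹ * (‖gradient v x‖ ^ (p - 2) * ⟪gradient v x, gradient φ x⟫) +
        h⁻¹ * (sp (lam - 1) (v x) * φ x) - h⁻¹ * (sp (lam - 1) (v (x + y)) * φ x)) := by
    refine integral_mono ((((j1.const_mul _).add (j2.const_mul _)).add (j3.const_mul _)).sub
      (j3.const_mul _)) ((((i1.const_mul _).add (i2.const_mul _)).add (i4.const_mul _)).sub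
      (i3.const_mul _)) fun x => ?_
    simp only
    by_cases hx : x ∈ tsupport η
    swap
    · simp [e0 x hx, eg0 x hx, hφ0 x hx, hφg0 x hx]
    have hx2 : x ∈ closedBall (0 : E N) 2 := hs hx
    have hx2' : ‖x‖ ≤ 2 := by simpa using hx2
    have hx4 : x ∈ ball (0 : E N) 4 := closedBall_subset_ball (by norm_num) hx2
    have hxy4 : x + y ∈ ball (0 : E N) 4 := by
      rw [mem_ball_zero_iff]
      have := norm_add_le x y
      linarith
    have hPK := h2 _ hxy4
    have hQK := h2 _ hx4
    have hlip := (convex_ball (0 : E N) 4).norm_image_sub_le_of_norm_fderiv_le (𝕜 := ℝ) (f := v) (C := K)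
      (fun x _ => hv.differentiable one_ne_zero x) (fun x hx => by rw [← norm_gradient]; exact h2 x hx)
      hx4 hxy4
    rw [add_sub_cancel_left, hy, Real.norm_eq_abs] at hlip
    have hspl := sp_lip (s := lam - 1) (by linarith) (h1 _ hxy4) (h1 _ hx4)
    set P := gradient v (x + y) with hPd
    set Q := gradient v x with hQd
    have hgwx : gradient w x = h⁻¹ • (P - Q) := hgw x
    have hmono := vec_mono (by linarith : 0 ≤ p - 2) P Q
    have hvl := vec_lip (by linarith : 0 ≤ p - 2) hPK hQK
    set W := ‖P‖ ^ (p - 2) • P - ‖Q‖ ^ (p - 2) • Q with hWd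
    have hzx := hz x
    have hηx := g0 x
    have eX : h⁻¹ * (‖P‖ ^ (p - 2) * ⟪P, gradient φ x⟫) + -h⁻¹ * (‖Q‖ ^ (p - 2) * ⟪Q, gradient φ x⟫) =
        3 * zz w ℓ x ^ 2 * η x ^ 2 * (h⁻¹ * h⁻¹ * ⟪W, P - Q⟫) +
          2 * zz w ℓ x ^ 3 * η x * (h⁻¹ * ⟪W, gradient η x⟫) := by
      have : h⁻¹ * (‖P‖ ^ (p - 2) * ⟪P, gradient φ x⟫) + -h⁻¹ * (‖Q‖ ^ (p - 2) * ⟪Q, gradient φ x⟫) =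
          h⁻¹ * ⟪W, gradient φ x⟫ := by
        rw [hWd, inner_sub_left, real_inner_smul_left, real_inner_smul_left]; ring
      rw [this, hφg, hgwx, inner_add_right, real_inner_smul_right, real_inner_smul_right,
        real_inner_smul_right]
      ring
    have na : ‖gradient w x‖ = h⁻¹ * ‖P - Q‖ := by
      rw [hgwx, norm_smul, norm_inv, Real.norm_of_nonneg hh.le]
    have hX : 3 * zz w ℓ x ^ 2 * η x ^ 2 * (c0 * ‖gradient w x‖ ^ 2) -
        2 * zz w ℓ x ^ 3 * η x * (C1 * ‖gradient w x‖ * ‖gradient η x‖) ≤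
        h⁻¹ * (‖P‖ ^ (p - 2) * ⟪P, gradient φ x⟫) + -h⁻¹ * (‖Q‖ ^ (p - 2) * ⟪Q, gradient φ x⟫) := by
      rw [eX]
      have s1 : 3 * zz w ℓ x ^ 2 * η x ^ 2 * (c0 * ‖gradient w x‖ ^ 2) ≤
          3 * zz w ℓ x ^ 2 * η x ^ 2 * (h⁻¹ * h⁻¹ * ⟪W, P - Q⟫) := by
        rcases hzx.eq_or_lt with hz0 | hz0
        · rw [← hz0]; simp
        · have hQk : k / 2 ≤ ‖Q‖ := by
            have hwx := hwle x hx2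
            have : 0 < w x - ℓ := by
              by_contra hcon
              have : zz w ℓ x = 0 := max_eq_right (not_lt.1 hcon)
              linarith
            have : w x = h⁻¹ * (v (x + y) - v x) := rfl
            linarith
          have hpow : (k / 2) ^ (p - 2) ≤ ‖Q‖ ^ (p - 2) :=
            Real.rpow_le_rpow (by positivity) hQk (by linarith)
          refine mul_le_mul_of_nonneg_left ?_ (by positivity)
          calc c0 * ‖gradient w x‖ ^ 2 = h⁻¹ * h⁻¹ * (1 / 2 * (k / 2) ^ (p - 2) * ‖P - Q‖ ^ 2) := by
                rw [na, hc0]; ring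
            _ ≤ h⁻¹ * h⁻¹ * (1 / 2 * ‖Q‖ ^ (p - 2) * ‖P - Q‖ ^ 2) := by gcongr
            _ ≤ _ := mul_le_mul_of_nonneg_left hmono (by positivity)
      have s2 : -(C1 * ‖gradient w x‖ * ‖gradient η x‖) ≤ h⁻¹ * ⟪W, gradient η x⟫ := by
        have hin := (abs_le.1 (abs_real_inner_le_norm W (gradient η x))).1
        have : ‖W‖ * ‖gradient η x‖ ≤ C1 * ‖P - Q‖ * ‖gradient η x‖ := by gcongr
        calc -(C1 * ‖gradient w x‖ * ‖gradient η x‖) = h⁻¹ * (-(C1 * ‖P - Q‖ * ‖gradient η x‖)) := by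
              rw [na]; ring
          _ ≤ _ := by gcongr; linarith
      have s3 : 2 * zz w ℓ x ^ 3 * η x * (-(C1 * ‖gradient w x‖ * ‖gradient η x‖)) ≤
          2 * zz w ℓ x ^ 3 * η x * (h⁻¹ * ⟪W, gradient η x⟫) := by gcongr
      linarith
    have hS : h⁻¹ * (sp (lam - 1) (v (x + y)) * φ x) - h⁻¹ * (sp (lam - 1) (v x) * φ x) ≤
        τ * (zz w ℓ x ^ 3 * η x ^ 2) := by
      have q1 : h⁻¹ * (sp (lam - 1) (v (x + y)) - sp (lam - 1) (v x)) ≤ τ := by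
        have lam0 : 0 ≤ lam - 1 + 1 := by linarith
        calc _ ≤ h⁻¹ * ((lam - 1 + 1) * 1 ^ (lam - 1) * (K * h)) := by
              gcongr
              refine (le_abs_self _).trans (hspl.trans ?_)
              gcongr
          _ = τ := by rw [hτ]; field_simp
      have : h⁻¹ * (sp (lam - 1) (v (x + y)) * φ x) - h⁻¹ * (sp (lam - 1) (v x) * φ x) =
          h⁻¹ * (sp (lam - 1) (v (x + y)) - sp (lam - 1) (v x)) * (zz w ℓ x ^ 3 * η x ^ 2) := by
        rw [hφd]; ring
      rw [this]
      gcongr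
    have := energy_pt hc0p hzx hηx (norm_nonneg (gradient w x)) hX hS
    linarith
  rw [hI, hJ] at hle
  have k1 : 0 ≤ ∫ x, zz w ℓ x ^ 4 * ‖gradient η x‖ ^ 2 :=
    integral_nonneg fun x => by have := hz x; simp only [Pi.zero_apply]; positivity
  have k2 : 0 ≤ ∫ x, zz w ℓ x ^ 3 * η x ^ 2 :=
    integral_nonneg fun x => by have := hz x; simp only [Pi.zero_apply]; positivity
  rw [div_mul_eq_mul_div, le_div_iff₀ (by positivity)]
  have k3 : 0 ≤ C1 ^ 2 / c0 := by positivity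
  have k4 := mul_nonneg k3 k2
  have k5 := mul_nonneg hτ0 k1
  linarith

end SES

namespace SES
open Set Filter Topology
variable {N : ℕ}

lemma taylor_unif {v : E N → ℝ} (hv : ContDiff ℝ 1 v) {κ : ℝ} (hκ : 0 < κ) : ∃ h : ℝ, 0 < h ∧ h ≤ 1 ∧
    ∀ x ∈ closedBall (0 : E N) 2, ∀ y : E N, ‖y‖ = h →
      |v (x + y) - v x - ⟪gradient v x, y⟫| ≤ κ * h := by
  have huc : UniformContinuousOn (fderiv ℝ v) (closedBall 0 3) :=
    (isCompact_closedBall _ _).uniformContinuousOn_of_continuous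
      (hv.continuous_fderiv one_ne_zero).continuousOn
  obtain ⟨ρ, hρ, H⟩ := Metric.uniformContinuousOn_iff.1 huc κ hκ
  refine ⟨min (ρ / 2) 1, by positivity, min_le_right _ _, fun x hx y hy => ?_⟩
  have hyρ : ‖y‖ ≤ ρ / 2 := by rw [hy]; exact min_le_left _ _
  have hy1 : ‖y‖ ≤ 1 := by rw [hy]; exact min_le_right _ _
  have hx' : ‖x‖ ≤ 2 := by simpa using hx
  have hconv : Convex ℝ (closedBall x ‖y‖) := convex_closedBall _ _
  have hm := hconv.norm_image_sub_le_of_norm_fderiv_le' (𝕜 := ℝ) (f := v) (φ := fderiv ℝ v x) (C := κ)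
    (fun z _ => hv.differentiable one_ne_zero z) (fun z hz => ?_) (x := x) (y := x + y)
    (by simp) (by simp)
  · rw [add_sub_cancel_left, Real.norm_eq_abs, hy] at hm
    have : ⟪gradient v x, y⟫ = fderiv ℝ v x y := by simp [gradient]
    rw [this]; exact hm
  · have hzx : dist z x ≤ ‖y‖ := hz
    have hz3 : ‖z‖ ≤ 3 := by
      have := norm_add_le (z - x) x
      rw [sub_add_cancel, ← dist_eq_norm] at this
      linarith
    rw [← dist_eq_norm]
    exact (H z (by simpa using hz3) x (by simp; linarith) (by linarith)).le

lemma grad_small (hN : 1 ≤ N) {p lam K ε : ℝ} (hp : 2 < p) (hlam : p - 1 < lam) (hK : 0 < K)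
    (hε : 0 < ε) : ∃ δ : ℝ, 0 < δ ∧ ∀ v : E N → ℝ, ContDiff ℝ 1 v → Weak p lam (ball 0 4) v →
      (∀ x ∈ ball (0 : E N) 4, |v x| ≤ δ) → (∀ x ∈ ball (0 : E N) 4, ‖gradient v x‖ ≤ K) →
      ‖gradient v 0‖ ≤ ε := by
  set k := ε / 3 with hk
  have hkp : 0 < k := by positivity
  obtain ⟨A, hA, HA⟩ := energy_of_weak (N := N) hp hlam hK.le hkp
  obtain ⟨ε0, hε0, HD⟩ := deGiorgi hN hkp hA
  obtain ⟨C, hC, HC⟩ := caccioppoli (N := N) hp hlam hK.le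
  set C' := (K ^ 4 + K ^ 3) / (k / 2) ^ p with hC'
  have hC'p : 0 < C' := by positivity
  refine ⟨min 1 (ε0 / (C' * C)), by positivity, fun v hv hW h1 h2 => ?_⟩
  set δ := min 1 (ε0 / (C' * C)) with hδ
  have hδp : 0 < δ := by positivity
  have hδ1 : δ ≤ 1 := min_le_left _ _
  by_cases hg : gradient v 0 = 0
  · rw [hg, norm_zero]; exact hε.le
  have hgn : 0 < ‖gradient v 0‖ := norm_pos_iff.2 hg
  obtain ⟨h, hh, hh1, HT⟩ := taylor_unif hv (by positivity : 0 < k / 2)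
  set y : E N := (h / ‖gradient v 0‖) • gradient v 0 with hy
  have hyn : ‖y‖ = h := by
    rw [hy, norm_smul, Real.norm_of_nonneg (by positivity)]; field_simp
  have hwle : ∀ x ∈ closedBall (0 : E N) 2, h⁻¹ * (v (x + y) - v x) ≤ ‖gradient v x‖ + k / 2 := by
    intro x hx
    have a := (abs_le.1 (HT x hx y hyn)).2
    have b := real_inner_le_norm (gradient v x) y
    rw [hyn] at b
    rw [inv_mul_le_iff₀ hh]
    nlinarith
  have hEn := HA v hv hW (fun x hx => (h1 x hx).trans hδ1) h2 y h hh hyn hh1 hwle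
  set w : E N → ℝ := fun x => h⁻¹ * (v (x + y) - v x) with hw
  have hvy : ContDiff ℝ 1 (fun x => v (x + y)) := hv.comp (contDiff_id.add contDiff_const)
  have hwc : ContDiff ℝ 1 w := contDiff_const.mul (hvy.sub hv)
  have cz := zz_cont hwc.continuous k
  have hI : ∫ x in closedBall (0 : E N) 2, (zz w k x ^ 4 + zz w k x ^ 3) ≤ ε0 := by
    have cc := HC δ hδp hδ1 v hv hW h1 h2
    have crp : Continuous fun x => ‖gradient v x‖ ^ p :=
      (continuous_gradient hv).norm.rpow_const fun x => Or.inr (by linarith)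
    calc ∫ x in closedBall (0 : E N) 2, (zz w k x ^ 4 + zz w k x ^ 3) ≤
        ∫ x in closedBall (0 : E N) 2, C' * ‖gradient v x‖ ^ p := by
          refine setIntegral_mono_on (contOn_cb (by fun_prop) 2) (contOn_cb (by fun_prop) 2)
            measurableSet_closedBall fun x hx => ?_
          have hx4 : x ∈ ball (0 : E N) 4 := closedBall_subset_ball (by norm_num) hx
          have hz := zz_nonneg w k x
          rcases hz.eq_or_lt with hz0 | hz0
          · rw [← hz0]; simp; positivity
          · have hwk : 0 < w x - k := by
              by_contra hcon
              have : zz w k x = 0 := max_eq_right (not_lt.1 hcon)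
              linarith
            have hze : zz w k x = w x - k := max_eq_left hwk.le
            have hwx : w x ≤ ‖gradient v x‖ + k / 2 := hwle x hx
            have q1 : k / 2 ≤ ‖gradient v x‖ := by linarith
            have q2 : zz w k x ≤ K := by have := h2 x hx4; linarith
            have q3 : (k / 2) ^ p ≤ ‖gradient v x‖ ^ p :=
              Real.rpow_le_rpow (by positivity) q1 (by linarith)
            calc zz w k x ^ 4 + zz w k x ^ 3 ≤ K ^ 4 + K ^ 3 := by gcongr
              _ = C' * (k / 2) ^ p := by rw [hC']; field_simp
              _ ≤ _ := by gcongr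
      _ = C' * ∫ x in closedBall (0 : E N) 2, ‖gradient v x‖ ^ p := integral_const_mul _ _
      _ ≤ C' * (C * δ) := by gcongr
      _ ≤ C' * (C * (ε0 / (C' * C))) := by gcongr; exact min_le_right _ _
      _ = ε0 := by field_simp
  have hfin := HD w hwc hEn hI
  have a := (abs_le.1 (HT 0 (by simp) y hyn)).1
  have hin : ⟪gradient v 0, y⟫ = h * ‖gradient v 0‖ := by
    rw [hy, real_inner_smul_right, real_inner_self_eq_norm_sq]; field_simp
  rw [hin] at a
  have hw0 : h⁻¹ * (v (0 + y) - v 0) ≤ 2 * k := hfin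
  rw [inv_mul_le_iff₀ hh] at hw0
  have : h * ‖gradient v 0‖ ≤ h * (3 * k) := by nlinarith
  have := le_of_mul_le_mul_left this hh
  linarith

end SES

namespace SES
open Set Filter Topology
variable {N : ℕ}

open scoped Convolution in
lemma mollify {φ : E N → ℝ} (hφ : ContDiff ℝ 1 φ) (hc : HasCompactSupport φ) {ρ ε : ℝ}
    (hρ : 0 < ρ) (hε : 0 < ε) :
    ∃ ψ : E N → ℝ, ContDiff ℝ (⊤ : ℕ∞) ψ ∧ tsupport ψ ⊆ cthickening ρ (tsupport φ) ∧
      (∀ x, |ψ x - φ x| ≤ ε) ∧ ∀ x, ‖gradient ψ x - gradient φ x‖ ≤ ε := by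
  have u1 : UniformContinuous φ := hc.uniformContinuous_of_continuous hφ.continuous
  have cf : Continuous (fderiv ℝ φ) := hφ.continuous_fderiv one_ne_zero
  have u2 : UniformContinuous (fderiv ℝ φ) := (hc.fderiv ℝ).uniformContinuous_of_continuous cf
  obtain ⟨d1, hd1, h1⟩ := Metric.uniformContinuous_iff.1 u1 ε hε
  obtain ⟨d2, hd2, h2⟩ := Metric.uniformContinuous_iff.1 u2 ε hε
  set r := min ρ (min d1 d2) with hr
  have hr0 : 0 < r := lt_min hρ (lt_min hd1 hd2)
  let b : ContDiffBump (0 : E N) := ⟨r / 2, r, by linarith, by linarith⟩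
  set L := ContinuousLinearMap.lsmul ℝ ℝ (E := ℝ) with hL
  have hfd : ∀ x, HasFDerivAt ((b.normed volume) ⋆[L, volume] φ)
      (((b.normed volume) ⋆[ContinuousLinearMap.lsmul ℝ ℝ, volume] (fderiv ℝ φ)) x) x := by
    intro x
    have := HasCompactSupport.hasFDerivAt_convolution_right (μ := volume) L hc
      ((b.continuous_normed (μ := volume)).locallyIntegrable (μ := volume)) hφ x
    refine this.congr_fderiv ?_
    rfl
  refine ⟨(b.normed volume) ⋆[L, volume] φ, ?_, ?_, ?_, ?_⟩
  · exact HasCompactSupport.contDiff_convolution_left L b.hasCompactSupport_normed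
      b.contDiff_normed hφ.continuous.locallyIntegrable
  · refine closure_minimal (fun x hx => ?_) isClosed_cthickening
    obtain ⟨y, hy, z, hz, rfl⟩ := support_convolution_subset L hx
    rw [b.support_normed_eq, mem_ball_zero_iff] at hy
    refine mem_cthickening_of_dist_le _ z _ _ (subset_closure hz) ?_
    rw [dist_eq_norm]
    have : y + z - z = y := by abel
    simp only [this]
    exact hy.le.trans (min_le_left _ _)
  · intro x
    rw [← Real.dist_eq]
    refine ContDiffBump.dist_normed_convolution_le hφ.continuous.aestronglyMeasurable ?_
    intro y hy
    exact (h1 (lt_of_lt_of_le hy ((min_le_right _ _).trans (min_le_left _ _)))).le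
  · intro x
    have e : gradient ((b.normed volume) ⋆[L, volume] φ) x - gradient φ x =
      (InnerProductSpace.toDual ℝ (E N)).symm (((b.normed volume) ⋆[ContinuousLinearMap.lsmul ℝ ℝ, volume] (fderiv ℝ φ)) x - fderiv ℝ φ x) := by
      rw [map_sub, ← (hfd x).fderiv]; rfl
    rw [e, LinearIsometryEquiv.norm_map, ← dist_eq_norm]
    refine ContDiffBump.dist_normed_convolution_le cf.aestronglyMeasurable ?_
    intro y hy
    exact (h2 (lt_of_lt_of_le hy ((min_le_right _ _).trans (min_le_right _ _)))).le

lemma weak_ext {f : E N → E N} {g : E N → ℝ} (hf : Continuous f) (hg : Continuous g)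
    {U : Set (E N)} (hU : IsOpen U)
    (h : ∀ φ : E N → ℝ, ContDiff ℝ (⊤ : ℕ∞) φ → HasCompactSupport φ → tsupport φ ⊆ U →
      ∫ x, ⟪f x, gradient φ x⟫ = ∫ x, g x * φ x)
    {φ : E N → ℝ} (hφ : ContDiff ℝ 1 φ) (hc : HasCompactSupport φ) (hs : tsupport φ ⊆ U) :
    ∫ x, ⟪f x, gradient φ x⟫ = ∫ x, g x * φ x := by
  obtain ⟨ρ, hρ, hT⟩ := IsCompact.exists_cthickening_subset_open hc hU hs
  set T := cthickening ρ (tsupport φ) with hTd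
  have cT : IsCompact T := IsCompact.cthickening hc
  set A := ∫ x in T, (‖f x‖ + |g x|) with hA
  have iA : IntegrableOn (fun x => ‖f x‖ + |g x|) T :=
    (hf.norm.add hg.abs).continuousOn.integrableOn_compact cT
  have hA0 : 0 ≤ A := integral_nonneg fun x => by positivity
  have sub : tsupport φ ⊆ T := self_subset_cthickening _
  rw [← sub_eq_zero, ← abs_nonpos_iff]
  refine le_of_forall_pos_le_add fun ε' hε' => ?_
  set ε := ε' / (A + 1) with hε
  have hε0 : 0 < ε := by positivity
  obtain ⟨ψ, hψ, ψs, ψ1, ψ2⟩ := mollify hφ hc hρ hε0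
  have ψc : HasCompactSupport ψ :=
    HasCompactSupport.of_support_subset_isCompact cT (subset_closure.trans ψs)
  have hψ1 : ContDiff ℝ 1 ψ := hψ.of_le (by exact_mod_cast le_top)
  have e := h ψ hψ ψc (ψs.trans hT)
  have cgφ := continuous_gradient hφ
  have cgψ := continuous_gradient hψ1
  have cφ := hφ.continuous
  have cψ := hψ1.continuous
  have i1 : Integrable fun x => ⟪f x, gradient φ x⟫ :=
    integrable_of (by fun_prop) hc fun x hx => by simp [gradient_eq_zero_of_notMem hx]
  have i2 : Integrable fun x => g x * φ x :=
    integrable_of (by fun_prop) hc fun x hx => by simp [image_eq_zero_of_notMem_tsupport hx]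
  have i3 : Integrable fun x => ⟪f x, gradient ψ x⟫ :=
    integrable_of (by fun_prop) ψc fun x hx => by simp [gradient_eq_zero_of_notMem hx]
  have i4 : Integrable fun x => g x * ψ x :=
    integrable_of (by fun_prop) ψc fun x hx => by simp [image_eq_zero_of_notMem_tsupport hx]
  have key : (∫ x, ⟪f x, gradient φ x⟫) - ∫ x, g x * φ x =
      ∫ x, ((⟪f x, gradient φ x⟫ - ⟪f x, gradient ψ x⟫) - (g x * φ x - g x * ψ x)) := by
    have j1 : Integrable fun x => ⟪f x, gradient φ x⟫ - ⟪f x, gradient ψ x⟫ := i1.sub i3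
    have j2 : Integrable fun x => g x * φ x - g x * ψ x := i2.sub i4
    rw [integral_sub j1 j2, integral_sub i1 i3, integral_sub i2 i4, e]
    ring
  have key2 : (∫ x, ((⟪f x, gradient φ x⟫ - ⟪f x, gradient ψ x⟫) - (g x * φ x - g x * ψ x))) =
      ∫ x in T, ((⟪f x, gradient φ x⟫ - ⟪f x, gradient ψ x⟫) - (g x * φ x - g x * ψ x)) := by
    refine (setIntegral_eq_integral_of_forall_compl_eq_zero fun x hx => ?_).symm
    have n1 : x ∉ tsupport φ := fun h => hx (sub h)
    have n2 : x ∉ tsupport ψ := fun h => hx (ψs h)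
    simp [gradient_eq_zero_of_notMem n1, gradient_eq_zero_of_notMem n2,
      image_eq_zero_of_notMem_tsupport n1, image_eq_zero_of_notMem_tsupport n2]
  rw [key, key2, zero_add]
  have : ‖∫ x in T, ((⟪f x, gradient φ x⟫ - ⟪f x, gradient ψ x⟫) - (g x * φ x - g x * ψ x))‖ ≤
      ∫ x in T, ε * (‖f x‖ + |g x|) := by
    refine norm_integral_le_of_norm_le (iA.const_mul ε) (Eventually.of_forall fun x => ?_)
    rw [← inner_sub_right, ← mul_sub]
    have a1 := abs_real_inner_le_norm (f x) (gradient φ x - gradient ψ x)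
    have a2 : ‖gradient φ x - gradient ψ x‖ ≤ ε := by rw [norm_sub_rev]; exact ψ2 x
    have a3 : |φ x - ψ x| ≤ ε := by rw [abs_sub_comm]; exact ψ1 x
    have a4 := norm_sub_le (⟪f x, gradient φ x - gradient ψ x⟫) (g x * (φ x - ψ x))
    rw [norm_mul] at a4
    simp only [Real.norm_eq_abs] at a4 ⊢
    have b1 := mul_le_mul_of_nonneg_left a2 (norm_nonneg (f x))
    have b2 := mul_le_mul_of_nonneg_left a3 (abs_nonneg (g x))
    linarith
  rw [integral_const_mul, Real.norm_eq_abs] at this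
  refine this.trans ?_
  rw [← hA, hε, div_mul_eq_mul_div, div_le_iff₀ (by positivity)]
  nlinarith

end SES

namespace SES
open Set Filter Topology
variable {N : ℕ}

lemma localize {p lam : ℝ} (hp : 2 < p) (hlam : p - 1 < lam) {Ω : Set (E N)} {x0 : E N} {R : ℝ}
    (hΩ : IsOpen Ω) (hR : 0 < R) (hb : ball x0 (2 * R) ⊆ Ω) {u : E N → ℝ} (hu : ContDiffOn ℝ 1 u Ω)
    (hW : ∀ φ : E N → ℝ, ContDiff ℝ (⊤ : ℕ∞) φ → HasCompactSupport φ → tsupport φ ⊆ Ω →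
            ∫ x in Ω, ‖gradient u x‖ ^ (p - 2) * ⟪gradient u x, gradient φ x⟫ =
              ∫ x in Ω, |u x| ^ (lam - 1) * u x * φ x)
    (hS : ∀ φ : E N → ℝ, ContDiff ℝ 1 φ → HasCompactSupport φ → tsupport φ ⊆ Ω →
            0 ≤ ∫ x in Ω,
              (‖gradient u x‖ ^ (p - 2) * ‖gradient φ x‖ ^ 2 +
                ((p - 2) * ‖gradient u x‖ ^ (p - 4) * ⟪gradient u x, gradient φ x⟫ ^ 2 -
                  lam * |u x| ^ (lam - 1) * φ x ^ 2))) :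
    ∃ w : E N → ℝ, ContDiff ℝ 1 w ∧ Weak p lam (ball x0 R) w ∧ Stab p lam (ball x0 R) w ∧
      w x0 = u x0 ∧ gradient w x0 = gradient u x0 := by
  let χ : ContDiffBump x0 := ⟨R, 3 / 2 * R, hR, by linarith⟩
  have hχs : tsupport χ ⊆ Ω := by
    rw [χ.tsupport_eq]
    exact (closedBall_subset_ball (by show 3 / 2 * R < 2 * R; linarith)).trans hb
  have hbΩ : ball x0 R ⊆ Ω := (ball_subset_ball (by linarith)).trans hb
  set w : E N → ℝ := fun x => χ x * u x with hw
  have cw : ContDiff ℝ 1 w := by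
    refine contDiff_iff_contDiffAt.2 fun x => ?_
    by_cases hx : x ∈ tsupport w
    swap
    · have : w =ᶠ[𝓝 x] fun _ => 0 := notMem_tsupport_iff_eventuallyEq.1 hx
      exact contDiffAt_const.congr_of_eventuallyEq this
    have : x ∈ Ω := hχs (tsupport_mul_subset_left hx)
    exact χ.contDiff.contDiffAt.mul (hu.contDiffAt (hΩ.mem_nhds this))
  have ew : ∀ x ∈ ball x0 R, w =ᶠ[𝓝 x] u := by
    intro x hx
    filter_upwards [isOpen_ball.mem_nhds hx] with y hy
    have : χ y = 1 := χ.one_of_mem_closedBall (ball_subset_closedBall hy)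
    simp [hw, this]
  have e1 : ∀ x ∈ ball x0 R, w x = u x := fun x hx => (ew x hx).eq_of_nhds
  have e2 : ∀ x ∈ ball x0 R, gradient w x = gradient u x := fun x hx => by
    unfold gradient; rw [(ew x hx).fderiv_eq]
  have cg := continuous_gradient cw
  have cr : Continuous fun x => ‖gradient w x‖ ^ (p - 2) :=
    cg.norm.rpow_const fun x => Or.inr (by linarith)
  have csp : Continuous (sp (lam - 1)) := (contDiff_sp (by linarith)).continuous
  have cwc := cw.continuous
  refine ⟨w, cw, ?_, ?_, e1 x0 (mem_ball_self hR), e2 x0 (mem_ball_self hR)⟩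
  · intro φ hφ hc hs
    have := weak_ext (f := fun x => ‖gradient w x‖ ^ (p - 2) • gradient w x)
      (g := fun x => sp (lam - 1) (w x)) (cr.smul cg) (csp.comp cwc) (U := ball x0 R)
      isOpen_ball ?_ hφ hc hs
    · simpa only [real_inner_smul_left] using this
    · intro φ hφ hc hs
      have h := hW φ hφ hc (hs.trans hbΩ)
      rw [setIntegral_eq_integral_of_forall_compl_eq_zero,
        setIntegral_eq_integral_of_forall_compl_eq_zero] at h
      · refine Eq.trans (integral_congr_ae (Eventually.of_forall fun x => ?_)) (h.trans
          (integral_congr_ae (Eventually.of_forall fun x => ?_)))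
        · by_cases hx : x ∈ tsupport φ
          · simp only [real_inner_smul_left, e2 x (hs hx)]
          · simp [gradient_eq_zero_of_notMem hx]
        · by_cases hx : x ∈ tsupport φ
          · simp only [sp, e1 x (hs hx)]
          · simp [image_eq_zero_of_notMem_tsupport hx]
      · intro x hx
        have : x ∉ tsupport φ := fun h' => hx (hbΩ (hs h'))
        simp [image_eq_zero_of_notMem_tsupport this]
      · intro x hx
        have : x ∉ tsupport φ := fun h' => hx (hbΩ (hs h'))
        simp [gradient_eq_zero_of_notMem this]
  · intro φ hφ hc hs
    have h := hS φ hφ hc (hs.trans hbΩ)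
    rw [setIntegral_eq_integral_of_forall_compl_eq_zero] at h
    · refine h.trans_eq (integral_congr_ae (Eventually.of_forall fun x => ?_))
      by_cases hx : x ∈ tsupport φ
      · simp only [e1 x (hs hx), e2 x (hs hx)]
      · simp [gradient_eq_zero_of_notMem hx, image_eq_zero_of_notMem_tsupport hx]
    · intro x hx
      have : x ∉ tsupport φ := fun h' => hx (hbΩ (hs h'))
      simp [gradient_eq_zero_of_notMem this, image_eq_zero_of_notMem_tsupport this]

/-- gradient of a rescaled function -/
lemma gradient_resc {w : E N → ℝ} (hw : ContDiff ℝ 1 w) (c s : ℝ) (y x : E N) :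
    gradient (fun z => c * w (y + s • z)) x = (c * s) • gradient w (y + s • x) := by
  have h1 : gradient (fun z => w (y + s • z)) x = s • gradient w (y + s • x) := by
    have := gradient_comp_smul (f := fun z => w (z + y))
      ((hw.comp (contDiff_id.add contDiff_const)).differentiable one_ne_zero) s x
    rw [gradient_shift] at this
    simpa only [add_comm] using this
  have hd : DifferentiableAt ℝ (fun z => w (y + s • z)) x := by
    have : ContDiff ℝ 1 (fun z => w (y + s • z)) := hw.comp (by fun_prop)
    exact (this.differentiable one_ne_zero) x
  have h2 := grad_comp (F := fun t => c * t) (F' := c) hd (by simpa using (hasDerivAt_id _).const_mul c)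
  rw [h2, h1, smul_smul]

lemma integral_resc (F : E N → ℝ) {m : ℝ} (hm : 0 < m) (y : E N) :
    ∫ x, F (m • (x - y)) = (m ^ N)⁻¹ * ∫ x, F x := by
  rw [integral_sub_right_eq_self (fun x => F (m • x)) y, Measure.integral_comp_smul]
  simp [abs_of_pos hm]

/-- test function pullback -/
lemma test_resc {φ : E N → ℝ} {m r : ℝ} (hm : 0 < m) {y : E N} {U : Set (E N)}
    (hφ : ContDiff ℝ 1 φ) (hc : HasCompactSupport φ) (hs : tsupport φ ⊆ ball 0 (m * r))
    (hU : ball y r ⊆ U) :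
    ContDiff ℝ 1 (fun x => φ (m • (x - y))) ∧ HasCompactSupport (fun x => φ (m • (x - y))) ∧
    tsupport (fun x => φ (m • (x - y))) ⊆ U ∧
    ∀ x, gradient (fun x => φ (m • (x - y))) x = m • gradient φ (m • (x - y)) := by
  have hsub : tsupport (fun x => φ (m • (x - y))) ⊆ (fun z => y + m⁻¹ • z) '' tsupport φ := by
    have hcl : IsCompact ((fun z => y + m⁻¹ • z) '' tsupport φ) := hc.isCompact.image (by fun_prop)
    refine closure_minimal (fun x hx => ⟨m • (x - y), subset_closure hx, ?_⟩) hcl.isClosed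
    simp [smul_smul, hm.ne']
  refine ⟨hφ.comp (by fun_prop), ?_, ?_, ?_⟩
  · exact HasCompactSupport.of_support_subset_isCompact (hc.isCompact.image (by fun_prop))
      (subset_closure.trans hsub)
  · refine hsub.trans ?_
    rintro _ ⟨z, hz, rfl⟩
    apply hU
    have := hs hz
    rw [mem_ball_zero_iff] at this
    rw [mem_ball, dist_eq_norm, add_sub_cancel_left, norm_smul, norm_inv, Real.norm_eq_abs,
      abs_of_pos hm, inv_mul_lt_iff₀ hm]
    exact this
  · intro x
    have := gradient_resc hφ 1 m (-(m • y)) x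
    simp only [one_mul] at this
    have e : ∀ z, m • (z - y) = -(m • y) + m • z := fun z => by rw [smul_sub]; abel
    simp only [e]
    exact this

lemma weak_resc {p lam a m r : ℝ} (hp : 2 < p) (hlam : p - 1 < lam)
    (ha : a * (lam + 1 - p) = p) (hm : 0 < m) {w : E N → ℝ} (hw : ContDiff ℝ 1 w)
    {y : E N} {U : Set (E N)} (hU : ball y r ⊆ U) (hW : Weak p lam U w) :
    Weak p lam (ball 0 (m * r)) (fun x => m ^ (-a) * w (y + m⁻¹ • x)) := by
  intro φ hφ hc hs
  obtain ⟨t1, t2, t3, t4⟩ := test_resc hm hφ hc hs hU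
  have h := hW _ t1 t2 t3
  simp only [gradient_resc hw, norm_smul, real_inner_smul_left]
  simp_rw [t4] at h
  simp only [real_inner_smul_right] at h
  have E1 := integral_resc (fun x => ‖gradient w (y + m⁻¹ • x)‖ ^ (p - 2) *
    (m * ⟪gradient w (y + m⁻¹ • x), gradient φ x⟫)) hm y
  have E2 := integral_resc (fun x => sp (lam - 1) (w (y + m⁻¹ • x)) * φ x) hm y
  have e : ∀ x, y + m⁻¹ • m • (x - y) = x := fun x => by simp [smul_smul, hm.ne']
  simp only [e] at E1 E2
  rw [E1, E2] at h
  have h' := mul_left_cancel₀ (by positivity) h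
  have hma : 0 < m ^ (-a) := by positivity
  have k1 : ∀ x, (‖m ^ (-a) * m⁻¹‖ * ‖gradient w (y + m⁻¹ • x)‖) ^ (p - 2) *
      (m ^ (-a) * m⁻¹ * ⟪gradient w (y + m⁻¹ • x), gradient φ x⟫) =
      m ^ (-(a * lam)) * (‖gradient w (y + m⁻¹ • x)‖ ^ (p - 2) *
        (m * ⟪gradient w (y + m⁻¹ • x), gradient φ x⟫)) := by
    intro x
    rw [Real.norm_eq_abs, abs_of_pos (by positivity), Real.mul_rpow (by positivity) (by positivity)]
    have : (m ^ (-a) * m⁻¹) ^ (p - 2) * (m ^ (-a) * m⁻¹) = m ^ (-(a * lam)) * m := by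
      rw [← Real.rpow_neg_one m, ← Real.rpow_add hm, ← Real.rpow_mul hm.le, ← Real.rpow_add hm]
      nth_rewrite 3 [← Real.rpow_one m]
      rw [← Real.rpow_add hm]
      congr 1
      linarith
    linear_combination (‖gradient w (y + m⁻¹ • x)‖ ^ (p - 2) *
      ⟪gradient w (y + m⁻¹ • x), gradient φ x⟫) * this
  have k2 : ∀ x, sp (lam - 1) (m ^ (-a) * w (y + m⁻¹ • x)) * φ x =
      m ^ (-(a * lam)) * (sp (lam - 1) (w (y + m⁻¹ • x)) * φ x) := by
    intro x
    unfold sp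
    rw [abs_mul, abs_of_pos hma, Real.mul_rpow hma.le (abs_nonneg _)]
    have : (m ^ (-a)) ^ (lam - 1) * m ^ (-a) = m ^ (-(a * lam)) := by
      rw [← Real.rpow_mul hm.le, ← Real.rpow_add hm]
      congr 1
      ring
    rw [← this]
    ring
  simp_rw [k1, k2]
  rw [integral_const_mul, integral_const_mul, h']

lemma stab_resc {p lam a m r : ℝ} (hp : 2 < p) (hlam : p - 1 < lam)
    (ha : a * (lam + 1 - p) = p) (hm : 0 < m) {w : E N → ℝ} (hw : ContDiff ℝ 1 w)
    {y : E N} {U : Set (E N)} (hU : ball y r ⊆ U) (hS : Stab p lam U w) :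
    Stab p lam (ball 0 (m * r)) (fun x => m ^ (-a) * w (y + m⁻¹ • x)) := by
  intro φ hφ hc hs
  obtain ⟨t1, t2, t3, t4⟩ := test_resc hm hφ hc hs hU
  have h := hS _ t1 t2 t3
  simp only [gradient_resc hw, norm_smul, real_inner_smul_left]
  simp_rw [t4] at h
  simp only [real_inner_smul_right, norm_smul] at h
  have E1 := integral_resc (fun x => ‖gradient w (y + m⁻¹ • x)‖ ^ (p - 2) *
    (‖m‖ * ‖gradient φ x‖) ^ 2 + ((p - 2) * ‖gradient w (y + m⁻¹ • x)‖ ^ (p - 4) *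
    (m * ⟪gradient w (y + m⁻¹ • x), gradient φ x⟫) ^ 2 -
      lam * |w (y + m⁻¹ • x)| ^ (lam - 1) * φ x ^ 2)) hm y
  have e : ∀ x, y + m⁻¹ • m • (x - y) = x := fun x => by simp [smul_smul, hm.ne']
  simp only [e] at E1
  rw [E1] at h
  have h' := nonneg_of_mul_nonneg_right h (by positivity)
  have hma : 0 < m ^ (-a) := by positivity
  have q1 : (m ^ (-a) * m⁻¹) ^ (p - 2) = m ^ (-(a * (lam - 1))) * m ^ 2 := by
    rw [← Real.rpow_neg_one m, ← Real.rpow_add hm, ← Real.rpow_mul hm.le, ← Real.rpow_natCast m 2,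
      ← Real.rpow_add hm]
    congr 1
    push_cast
    linarith
  have q2 : (m ^ (-a) * m⁻¹) ^ (p - 4) * (m ^ (-a) * m⁻¹) ^ 2 = m ^ (-(a * (lam - 1))) * m ^ 2 := by
    rw [← q1, ← Real.rpow_natCast (m ^ (-a) * m⁻¹) 2, ← Real.rpow_add (by positivity)]
    congr 1
    push_cast
    ring
  have q3 : (m ^ (-a)) ^ (lam - 1) = m ^ (-(a * (lam - 1))) := by
    rw [← Real.rpow_mul hm.le]
    congr 1
    ring
  have k : ∀ x, (‖m ^ (-a) * m⁻¹‖ * ‖gradient w (y + m⁻¹ • x)‖) ^ (p - 2) * ‖gradient φ x‖ ^ 2 +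
      ((p - 2) * (‖m ^ (-a) * m⁻¹‖ * ‖gradient w (y + m⁻¹ • x)‖) ^ (p - 4) *
        (m ^ (-a) * m⁻¹ * ⟪gradient w (y + m⁻¹ • x), gradient φ x⟫) ^ 2 -
        lam * |m ^ (-a) * w (y + m⁻¹ • x)| ^ (lam - 1) * φ x ^ 2) =
      m ^ (-(a * (lam - 1))) * (‖gradient w (y + m⁻¹ • x)‖ ^ (p - 2) *
    (‖m‖ * ‖gradient φ x‖) ^ 2 + ((p - 2) * ‖gradient w (y + m⁻¹ • x)‖ ^ (p - 4) *
    (m * ⟪gradient w (y + m⁻¹ • x), gradient φ x⟫) ^ 2 -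
      lam * |w (y + m⁻¹ • x)| ^ (lam - 1) * φ x ^ 2)) := by
    intro x
    have hq : 0 < m ^ (-a) * m⁻¹ := by positivity
    rw [Real.norm_eq_abs, Real.norm_eq_abs m, abs_of_pos hm, abs_of_pos hq,
      Real.mul_rpow hq.le (by positivity), Real.mul_rpow hq.le (by positivity),
      abs_mul, abs_of_pos hma, Real.mul_rpow hma.le (abs_nonneg _), q3, q1]
    linear_combination ((p - 2) * ‖gradient w (y + m⁻¹ • x)‖ ^ (p - 4) *
      ⟪gradient w (y + m⁻¹ • x), gradient φ x⟫ ^ 2) * q2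
  simp_rw [k]
  rw [integral_const_mul]
  positivity

end SES

namespace SES
open Set Filter Topology
variable {N : ℕ}

lemma root_le {t s b : ℝ} (ht : 0 ≤ t) (hs : 0 ≤ s) (hb : 0 < b) : t ^ (1 / b) ≤ s ↔ t ≤ s ^ b := by
  rw [one_div]
  exact Real.rpow_inv_le_iff_of_pos ht hs hb

lemma Weak.mono {p lam : ℝ} {U V : Set (E N)} {v : E N → ℝ} (h : Weak p lam V v) (hUV : U ⊆ V) :
    Weak p lam U v := fun φ a b c => h φ a b (c.trans hUV)

lemma Stab.mono {p lam : ℝ} {U V : Set (E N)} {v : E N → ℝ} (h : Stab p lam V v) (hUV : U ⊆ V) :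
    Stab p lam U v := fun φ a b c => h φ a b (c.trans hUV)

lemma doubling (hN : 1 ≤ N) {p lam a : ℝ} (hp : 2 < p) (hlam₁ : p - 1 < lam)
    (hlam₂ : (N : ℝ) > p * (p + 3) / (p - 1) → lam < LambdaC N p)
    (ha0 : 0 < a) (ha : a * (lam + 1 - p) = p) :
    ∃ R1 : ℝ, 0 < R1 ∧ ∀ (w : E N → ℝ) (x0 : E N) (R : ℝ), 0 < R → ContDiff ℝ 1 w →
      Weak p lam (ball x0 R) w → Stab p lam (ball x0 R) w →
      R * (|w x0| ^ (1 / a) + ‖gradient w x0‖ ^ (1 / (a + 1))) ≤ R1 := by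
  obtain ⟨γ, hγ1, hγ2, hγ3⟩ := exists_gamma N hp hlam₁ hlam₂ hN
  obtain ⟨δ1, hδ1, HG⟩ := grad_small hN (K := 2 ^ (a + 1)) (ε := (1 / 3) ^ (a + 1)) hp hlam₁
    (by positivity) (by positivity)
  obtain ⟨R0, hR0, HS⟩ := small_of_stable (N := N) hp hlam₁ hγ1 hγ2 hγ3 (K := 2 ^ (a + 1))
    (δ := min δ1 ((1 / 3) ^ a)) (by positivity) (lt_min hδ1 (by positivity))
  refine ⟨2 * R0, by linarith, fun w x0 R hR cw hW hS => ?_⟩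
  by_contra hcon
  push Not at hcon
  set M : E N → ℝ := fun x => |w x| ^ (1 / a) + ‖gradient w x‖ ^ (1 / (a + 1)) with hM
  have hM0 : ∀ x, 0 ≤ M x := fun x => by positivity
  have cM : Continuous M :=
    (cw.continuous.abs.rpow_const fun x => Or.inr (by positivity)).add
      ((continuous_gradient cw).norm.rpow_const fun x => Or.inr (by positivity))
  obtain ⟨y, hy, hmax⟩ := (isCompact_closedBall x0 R).exists_isMaxOn
    ⟨x0, mem_closedBall_self hR.le⟩
    (f := fun x => (R - dist x x0) * M x) (by fun_prop)
  rw [isMaxOn_iff] at hmax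
  have h0 := hmax x0 (mem_closedBall_self hR.le)
  simp only [dist_self, sub_zero] at h0
  obtain ⟨d, hd⟩ : ∃ d, d = R - dist y x0 := ⟨_, rfl⟩
  obtain ⟨m, hm⟩ : ∃ m, m = M y := ⟨_, rfl⟩
  rw [← hd, ← hm] at h0
  have hdm : 2 * R0 < d * m := lt_of_lt_of_le hcon h0
  have hm0' : 0 ≤ m := hm ▸ hM0 y
  have hd0 : 0 < d := by
    by_contra hh
    nlinarith [mul_nonneg (sub_nonneg.2 (not_lt.1 hh)) hm0']
  have hm0 : 0 < m := by
    by_contra hh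
    have : m = 0 := le_antisymm (not_lt.1 hh) hm0'
    rw [this] at hdm; linarith
  have hM2 : ∀ x ∈ ball y (d / 2), M x ≤ 2 * m := by
    intro x hx
    have t := dist_triangle x y x0
    rw [mem_ball] at hx
    have hx' : x ∈ closedBall x0 R := by rw [mem_closedBall]; linarith
    have := hmax x hx'
    rw [← hd, ← hm] at this
    have h3 : d / 2 ≤ R - dist x x0 := by linarith
    have h4 := mul_le_mul_of_nonneg_right h3 (hM0 x)
    have : d / 2 * M x ≤ d / 2 * (2 * m) := by linarith
    exact le_of_mul_le_mul_left this (by linarith)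
  have hU : ball y (d / 2) ⊆ ball x0 R := by
    intro x hx
    have t := dist_triangle x y x0
    rw [mem_ball] at hx ⊢
    linarith
  have hmr : R0 ≤ m * (d / 2) := by nlinarith
  have W := (weak_resc hp hlam₁ ha hm0 cw hU hW).mono (ball_subset_ball hmr)
  have S := (stab_resc hp hlam₁ ha hm0 cw hU hS).mono (ball_subset_ball hmr)
  set v : E N → ℝ := fun x => m ^ (-a) * w (y + m⁻¹ • x) with hv
  have cv : ContDiff ℝ 1 v := contDiff_const.mul (cw.comp (by fun_prop))
  have hmm : m ^ (-a) * m⁻¹ = (m ^ (a + 1))⁻¹ := by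
    rw [Real.rpow_neg hm0.le, Real.rpow_add hm0, Real.rpow_one, mul_inv]
  have gv : ∀ x, ‖gradient v x‖ = (m ^ (a + 1))⁻¹ * ‖gradient w (y + m⁻¹ • x)‖ := by
    intro x
    rw [hv, gradient_resc cw, hmm, norm_smul, Real.norm_eq_abs, abs_of_pos (by positivity)]
  have gK : ∀ x ∈ ball (0 : E N) R0, ‖gradient v x‖ ≤ 2 ^ (a + 1) := by
    intro x hx
    rw [gv, inv_mul_le_iff₀ (by positivity), ← Real.mul_rpow hm0.le (by norm_num),
      ← root_le (norm_nonneg _) (by positivity) (by positivity)]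
    have hx' : y + m⁻¹ • x ∈ ball y (d / 2) := by
      rw [mem_ball_zero_iff] at hx
      rw [mem_ball, dist_eq_norm, add_sub_cancel_left, norm_smul, norm_inv, Real.norm_eq_abs,
        abs_of_pos hm0, inv_mul_lt_iff₀ hm0]
      linarith
    have h1 := hM2 _ hx'
    have h2 : 0 ≤ |w (y + m⁻¹ • x)| ^ (1 / a) := by positivity
    simp only [hM] at h1
    linarith
  have sm := HS v cv W S gK
  have b4 : ball (0 : E N) 4 ⊆ ball 0 R0 := ball_subset_ball hR0.le
  have g0 := HG v cv (W.mono b4) (fun x hx => (sm x hx).trans (min_le_left _ _))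
    (fun x hx => gK x (b4 hx))
  have v0 := (sm 0 (mem_ball_self (by norm_num))).trans (min_le_right _ _)
  rw [gv, smul_zero, add_zero, inv_mul_le_iff₀ (by positivity),
    ← Real.mul_rpow hm0.le (by norm_num),
    ← root_le (norm_nonneg _) (by positivity) (by positivity)] at g0
  simp only [hv] at v0
  rw [smul_zero, add_zero, abs_mul, abs_of_pos (by positivity), Real.rpow_neg hm0.le,
    inv_mul_le_iff₀ (by positivity), ← Real.mul_rpow hm0.le (by norm_num),
    ← root_le (abs_nonneg _) (by positivity) (by positivity)] at v0
  have : m = |w y| ^ (1 / a) + ‖gradient w y‖ ^ (1 / (a + 1)) := hm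
  linarith

lemma ball_infDist_subset {Ω : Set (E N)} (hΩ : IsOpen Ω) {x : E N} (hx : x ∈ Ω) :
    ball x (infDist x (frontier Ω)) ⊆ Ω := by
  have hdisj : Disjoint (ball x (infDist x (frontier Ω))) (frontier Ω) := disjoint_ball_infDist
  by_cases h : (ball x (infDist x (frontier Ω))).Nonempty
  · have hpc : IsPreconnected (ball x (infDist x (frontier Ω))) := (convex_ball _ _).isPreconnected
    refine hpc.subset_of_closure_inter_subset hΩ
      ⟨x, mem_ball_self (Metric.nonempty_ball.1 h), hx⟩ ?_
    rintro z ⟨hz, hzb⟩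
    by_contra hzo
    exact Set.disjoint_left.1 hdisj hzb ⟨hz, fun h => hzo (interior_subset h)⟩
  · rw [not_nonempty_iff_eq_empty.1 h]; exact empty_subset _

lemma infDist_frontier_pos {Ω : Set (E N)} (hΩ : IsOpen Ω) (hne : Ω ≠ univ) {x : E N} (hx : x ∈ Ω) :
    0 < infDist x (frontier Ω) := by
  have h1 : (frontier Ω).Nonempty := nonempty_frontier_iff.2 ⟨⟨x, hx⟩, hne⟩
  refine (isClosed_frontier.notMem_iff_infDist_pos h1).1 fun h => ?_
  rw [hΩ.frontier_eq] at h
  exact h.2 hx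

end SES

/-- **Theorem 2.2.** Let `p > 2` and `Ω ≠ ℝ^N` a domain; assume `p - 1 < λ`, and
`λ < Λ_c(N, p)` in case `N > p(p+3)/(p-1)`. Then there is `C = C(p, N, λ) > 0`
(independent of `Ω` and `u`) such that any stable `C¹` weak solution `u` of
`-Δ_p u = |u|^{λ-1} u` on `Ω` satisfies
`|u(x)| + |∇u(x)|^{p/(λ+1)} ≤ C ⬝ dist(x, ∂Ω)^{-p/(λ+1-p)}` for all `x ∈ Ω`. -/
theorem singularity_estimate_stable
    (N : ℕ) (p lam : ℝ) (hp : 2 < p)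
    (hlam₁ : p - 1 < lam)
    (hlam₂ : (N : ℝ) > p * (p + 3) / (p - 1) → lam < LambdaC N p) :
    ∃ C : ℝ, 0 < C ∧
      ∀ Ω : Set (EuclideanSpace ℝ (Fin N)),
        IsOpen Ω → IsConnected Ω → Ω ≠ Set.univ →
        ∀ u : EuclideanSpace ℝ (Fin N) → ℝ, ContDiffOn ℝ 1 u Ω →
          -- `u` is a weak solution of `-Δ_p u = |u|^{λ-1} u` on `Ω`
          (∀ φ : EuclideanSpace ℝ (Fin N) → ℝ,
            ContDiff ℝ (⊤ : ℕ∞) φ → HasCompactSupport φ → tsupport φ ⊆ Ω →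
            ∫ x in Ω, ‖gradient u x‖ ^ (p - 2) * ⟪gradient u x, gradient φ x⟫ =
              ∫ x in Ω, |u x| ^ (lam - 1) * u x * φ x) →
          -- `u` is stable: `L_u(φ, φ) ≥ 0` for all `φ ∈ C_c^1(Ω)`
          (∀ φ : EuclideanSpace ℝ (Fin N) → ℝ,
            ContDiff ℝ 1 φ → HasCompactSupport φ → tsupport φ ⊆ Ω →
            0 ≤ ∫ x in Ω,
              (‖gradient u x‖ ^ (p - 2) * ‖gradient φ x‖ ^ 2 +
                ((p - 2) * ‖gradient u x‖ ^ (p - 4) * ⟪gradient u x, gradient φ x⟫ ^ 2 -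
                  lam * |u x| ^ (lam - 1) * φ x ^ 2))) →
          ∀ x ∈ Ω,
            |u x| + ‖gradient u x‖ ^ (p / (lam + 1)) ≤
              C * infDist x (frontier Ω) ^ (-(p / (lam + 1 - p))) := by
  rcases Nat.eq_zero_or_pos N with h0 | hN
  · subst h0
    refine ⟨1, one_pos, fun Ω _ hc hne => absurd ?_ hne⟩
    obtain ⟨z, hz⟩ := hc.nonempty
    exact Set.eq_univ_of_forall fun x => (Subsingleton.elim z x) ▸ hz
  have hq : 0 < lam + 1 - p := by linarith
  obtain ⟨a, hadef⟩ : ∃ a, a = p / (lam + 1 - p) := ⟨_, rfl⟩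
  have ha0 : 0 < a := by rw [hadef]; exact div_pos (by linarith) hq
  have ha : a * (lam + 1 - p) = p := by rw [hadef]; field_simp
  obtain ⟨R1, hR1, H⟩ := SES.doubling hN hp hlam₁ hlam₂ ha0 ha
  refine ⟨2 * (2 * R1) ^ a, by positivity, fun Ω hΩ _ hne u hu hW hS x hx => ?_⟩
  have hd := SES.infDist_frontier_pos hΩ hne hx
  have hb := SES.ball_infDist_subset hΩ hx
  obtain ⟨d, hdd⟩ : ∃ d, d = infDist x (frontier Ω) := ⟨_, rfl⟩
  rw [← hdd] at hd hb ⊢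
  have h2 : 2 * (d / 2) = d := by ring
  obtain ⟨w, cw, wW, wS, e1, e2⟩ := SES.localize (x0 := x) (R := d / 2) hp hlam₁ hΩ
    (by linarith) (by rw [h2]; exact hb) hu hW hS
  have key := H w x (d / 2) (by linarith) cw wW wS
  rw [e1, e2] at key
  have k1 : 0 ≤ |u x| ^ (1 / a) := by positivity
  have k2 : 0 ≤ ‖gradient u x‖ ^ (1 / (a + 1)) := by positivity
  have hs0 : 0 ≤ 2 * R1 / d := by positivity
  have key' : |u x| ^ (1 / a) + ‖gradient u x‖ ^ (1 / (a + 1)) ≤ 2 * R1 / d := by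
    rw [le_div_iff₀ hd]; linarith
  have m1 : |u x| ≤ (2 * R1 / d) ^ a := (SES.root_le (abs_nonneg _) hs0 ha0).1 (by linarith)
  have hexp : p / (lam + 1) = 1 / (a + 1) * a := by
    have h1 : lam + 1 ≠ 0 := by linarith
    have h3 : a + 1 ≠ 0 := by linarith
    field_simp
    linarith
  have m2 : ‖gradient u x‖ ^ (p / (lam + 1)) ≤ (2 * R1 / d) ^ a := by
    rw [hexp, Real.rpow_mul (norm_nonneg _)]
    exact Real.rpow_le_rpow k2 (by linarith) ha0.le
  rw [← hadef, Real.rpow_neg hd.le]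
  have m3 : (2 * R1 / d) ^ a = (2 * R1) ^ a * (d ^ a)⁻¹ := by
    rw [Real.div_rpow (by positivity) hd.le, div_eq_mul_inv]
  rw [m3] at m1 m2
  linarith
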